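/- arXiv:2010.09502 — 2 statements merged into one kernel-verified Lean document; each statement's English description precedes it below -/
import Mathlib

section
/- For every x > 0 and every n ∈ ℕ, n ≥ 1, the integral ∫₀^∞ cos(nt) · H₀(2x·cosh t) dt converges absolutely and Re[J_{in/2}(x)²] / cosh(πn/2) = (2/π) · ∫₀^∞ cos(nt) · H₀(2x·cosh t) dt. -/
open MeasureTheory Filter Topology

/-- Bessel function of the first kind of complex order `ν` at real `x > 0`. -/
noncomputable def besselJ (ν : ℂ) (x : ℝ) : ℂ :=
  ∑' k : ℕ, ((-1 : ℂ) ^ k * Complex.exp ((ν + 2 * k) * (Real.log (x / 2) : ℂ))) /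
    ((Nat.factorial k : ℂ) * Complex.Gamma (ν + k + 1))

/-- Bessel function of the second kind of complex order `ν` at real `x > 0`. -/
noncomputable def besselY (ν : ℂ) (x : ℝ) : ℂ :=
  (besselJ ν x * Complex.cos (Real.pi * ν) - besselJ (-ν) x) / Complex.sin (Real.pi * ν)

/-- Bessel function of the first kind of order `0` (real-valued). -/
noncomputable def besselJ0 (x : ℝ) : ℝ :=
  ∑' k : ℕ, (-1 : ℝ) ^ k * (x / 2) ^ (2 * k) / (Nat.factorial k : ℝ) ^ 2

/-- Lommel function `S_{-1,0}` for `x > 0`. -/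
noncomputable def lommelS (x : ℝ) : ℝ :=
  ∫ t in Set.Ioi (0 : ℝ), t * Real.exp (-x * Real.sinh t)

/-- Struve function `K₀` for `x > 0`. -/
noncomputable def struveK0 (x : ℝ) : ℝ :=
  (2 / Real.pi) * ∫ t in Set.Ioi (0 : ℝ), Real.exp (-x * Real.sinh t)

/-- Bessel function of the second kind of order `0` (real-valued, for `x > 0`). -/
noncomputable def besselY0 (x : ℝ) : ℝ :=
  (2 / Real.pi) * ((Real.log (x / 2) + Real.eulerMascheroniConstant) * besselJ0 x +
    ∑' k : ℕ, (-1 : ℝ) ^ k * ((harmonic (k + 1) : ℚ) : ℝ) * (x / 2) ^ (2 * (k + 1)) /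
      (Nat.factorial (k + 1) : ℝ) ^ 2)

/-- Struve function `H₀`: `H₀ = K₀ˢ + Y₀`. -/
noncomputable def struveH0 (x : ℝ) : ℝ := struveK0 x + besselY0 x

/-- upper part integral -/
noncomputable def TT (a q : ℂ) : ℂ :=
  ∫ t in Set.Ioi (0 : ℝ), Complex.exp (a * t - q * Real.exp t)

lemma TT_norm_bound (a q : ℂ) (hq : 0 < q.re) : ∃ C : ℝ, ∀ t : ℝ, 0 ≤ t →
    ‖Complex.exp (a * t - q * Real.exp t)‖ ≤ C * Real.exp (-t) := by
  refine ⟨Real.exp ((a.re + 1) ^ 2 / (2 * q.re)), fun t ht => ?_⟩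
  rw [Complex.norm_exp, ← Real.exp_add]
  apply Real.exp_le_exp.2
  have h1 : (a * t - q * Real.exp t).re = a.re * t - q.re * Real.exp t := by
    simp [-Complex.ofReal_exp]
  rw [h1]
  have h2 := Real.quadratic_le_exp_of_nonneg ht
  have h3 : (a.re + 1) * t - q.re * (t ^ 2 / 2) ≤ (a.re + 1) ^ 2 / (2 * q.re) := by
    rw [le_div_iff₀ (by positivity)]
    nlinarith [sq_nonneg ((a.re + 1) - q.re * t)]
  nlinarith [mul_le_mul_of_nonneg_left h2 hq.le]

lemma TT_cont (a q : ℂ) : Continuous (fun t : ℝ => Complex.exp (a * t - q * Real.exp t)) := by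
  fun_prop

lemma TT_int (a q : ℂ) (hq : 0 < q.re) :
    IntegrableOn (fun t : ℝ => Complex.exp (a * t - q * Real.exp t)) (Set.Ioi 0) := by
  obtain ⟨C, hC⟩ := TT_norm_bound a q hq
  refine Integrable.mono' (g := fun t => C * Real.exp (-t)) ?_
    (TT_cont a q).aestronglyMeasurable ?_
  · exact (integrableOn_exp_neg_Ioi 0).const_mul C
  · refine (ae_restrict_iff' measurableSet_Ioi).2 (ae_of_all _ fun t ht => hC t (le_of_lt ht))

lemma TT_rec (a q : ℂ) (hq : 0 < q.re) :
    q * TT (a + 1) q = Complex.exp (-q) + a * TT a q := by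
  have hd : ∀ t ∈ Set.Ici (0:ℝ), HasDerivAt (fun t : ℝ => Complex.exp (a * t - q * Real.exp t))
      (a * Complex.exp (a * t - q * Real.exp t) -
        q * Complex.exp ((a + 1) * t - q * Real.exp t)) t := by
    intro t _
    have h1 : HasDerivAt (fun t : ℝ => (a * t - q * Real.exp t : ℂ))
        (a * 1 - q * (Real.exp t : ℝ)) t :=
      ((Complex.ofRealCLM.hasDerivAt (x := t)).const_mul a).sub
        ((Real.hasDerivAt_exp t).ofReal_comp.const_mul q)
    convert h1.cexp using 1
    have : Complex.exp ((a + 1) * t - q * Real.exp t)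
        = Complex.exp (a * t - q * Real.exp t) * Real.exp t := by
      rw [Complex.ofReal_exp, ← Complex.exp_add]; ring_nf
    rw [this]; ring
  have hi := ((TT_int a q hq).const_mul a).sub ((TT_int (a+1) q hq).const_mul q)
  have ht : Tendsto (fun t : ℝ => Complex.exp (a * t - q * Real.exp t)) atTop (𝓝 0) := by
    obtain ⟨C, hC⟩ := TT_norm_bound a q hq
    refine squeeze_zero_norm' (a := fun t => C * Real.exp (-t)) ?_ ?_
    · filter_upwards [eventually_ge_atTop 0] with t ht using hC t ht
    · simpa using (Real.tendsto_exp_neg_atTop_nhds_zero).const_mul C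
  have := integral_Ioi_of_hasDerivAt_of_tendsto' hd hi ht
  rw [integral_sub ((TT_int a q hq).const_mul a) ((TT_int (a+1) q hq).const_mul q),
    integral_const_mul, integral_const_mul] at this
  simp at this
  unfold TT
  simp
  linear_combination -this

/-- lower series -/
noncomputable def SS (a q : ℂ) : ℂ := ∑' m : ℕ, (-q) ^ m / (Nat.factorial m * (a + m))

lemma exp_summable_norm (q : ℂ) : Summable (fun m : ℕ => ‖q‖ ^ m / (Nat.factorial m : ℝ)) :=
  Real.summable_pow_div_factorial _

lemma SS_term_bound (a q : ℂ) (c : ℝ) (hc : 0 < c) (m : ℕ) (h : c ≤ ‖a + m‖) :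
    ‖(-q) ^ m / (Nat.factorial m * (a + m))‖ ≤ c⁻¹ * (‖q‖ ^ m / (Nat.factorial m : ℝ)) := by
  rw [norm_div, norm_mul, norm_pow, norm_neg, Complex.norm_natCast]
  rw [inv_mul_eq_div, div_div]
  gcongr

lemma SS_summable (a q : ℂ) (h : ∃ c : ℝ, 0 < c ∧ ∀ m : ℕ, c ≤ ‖a + m‖) :
    Summable (fun m : ℕ => (-q) ^ m / (Nat.factorial m * (a + m))) := by
  obtain ⟨c, hc, h⟩ := h
  exact Summable.of_norm_bounded ((exp_summable_norm q).mul_left c⁻¹)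
    (fun m => SS_term_bound a q c hc m (h m))

lemma exp_hasSum (q : ℂ) : HasSum (fun m : ℕ => q ^ m / (Nat.factorial m : ℂ)) (Complex.exp q) := by
  rw [Complex.exp_eq_exp_ℂ]
  exact NormedSpace.expSeries_div_hasSum_exp q

lemma SS_rec (a q : ℂ) (h : ∃ c : ℝ, 0 < c ∧ ∀ m : ℕ, c ≤ ‖a + m‖) :
    q * SS (a + 1) q = a * SS a q - Complex.exp (-q) := by
  have hs := SS_summable a q h
  have h1 := (hs.hasSum.mul_left a).sub (exp_hasSum (-q))
  have h2 : ∀ m : ℕ, a * ((-q) ^ m / (Nat.factorial m * (a + m))) - (-q) ^ m / Nat.factorial m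
      = - (m * (-q) ^ m / (Nat.factorial m * (a + m))) := by
    intro m
    obtain ⟨c, hc, h⟩ := h
    have : a + m ≠ 0 := by
      have := h m; intro h0; rw [h0, norm_zero] at this; linarith
    have : (Nat.factorial m : ℂ) ≠ 0 := by exact_mod_cast Nat.factorial_ne_zero m
    field_simp
    ring
  simp_rw [h2] at h1
  have h3 := (hasSum_nat_add_iff' 1).2 h1
  simp only [Finset.range_one, Finset.sum_singleton, Nat.cast_zero, zero_mul, zero_div, neg_zero,
    sub_zero] at h3
  rw [show a * SS a q = a * ∑' m : ℕ, (-q) ^ m / (Nat.factorial m * (a + m)) from rfl, ← h3.tsum_eq,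
    SS, ← tsum_mul_left]
  congr 1; ext m
  have : (Nat.factorial m : ℂ) ≠ 0 := by exact_mod_cast Nat.factorial_ne_zero m
  have : (m + 1 : ℂ) ≠ 0 := by exact_mod_cast Nat.succ_ne_zero m
  push_cast [Nat.factorial_succ]
  rw [pow_succ, show a + 1 + (m:ℂ) = a + (m + 1) by ring, ← neg_div, mul_div_assoc', ]
  rw [show -((m + 1) * ((-q) ^ m * -q)) = (m+1) * (q * (-q)^m) by ring, mul_assoc (m+1 : ℂ),
    mul_div_mul_left _ _ this]

noncomputable def GG (a q : ℂ) : ℂ :=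
  ∫ u in Set.Ioi (0 : ℝ), (u : ℂ) ^ (a - 1) * Complex.exp (-q * u)

lemma GG_norm (a q : ℂ) (u : ℝ) (hu : 0 < u) :
    ‖(u : ℂ) ^ (a - 1) * Complex.exp (-q * u)‖ = u ^ (a.re - 1) * Real.exp (-q.re * u) := by
  rw [norm_mul, Complex.norm_cpow_eq_rpow_re_of_pos hu, Complex.norm_exp]
  simp

lemma GG_rint (a b : ℝ) (ha : 0 < a) (hb : 0 < b) :
    IntegrableOn (fun u : ℝ => u ^ (a - 1) * Real.exp (-b * u)) (Set.Ioi 0) := by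
  have := integrableOn_rpow_mul_exp_neg_mul_rpow (p := 1) (s := a - 1) (b := b) (by linarith)
    one_pos hb
  simpa using this

lemma GG_meas (a q : ℂ) : AEStronglyMeasurable
    (fun u : ℝ => (u : ℂ) ^ (a - 1) * Complex.exp (-q * u)) (volume.restrict (Set.Ioi 0)) := by
  refine ContinuousOn.aestronglyMeasurable ?_ measurableSet_Ioi
  intro u hu
  refine ContinuousAt.continuousWithinAt ?_
  refine ContinuousAt.mul ?_ (by fun_prop)
  exact (continuousAt_cpow_const (Or.inl (by simpa using hu))).comp
    Complex.continuous_ofReal.continuousAt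

lemma GG_int (a q : ℂ) (ha : 0 < a.re) (hq : 0 < q.re) :
    IntegrableOn (fun u : ℝ => (u : ℂ) ^ (a - 1) * Complex.exp (-q * u)) (Set.Ioi 0) := by
  refine Integrable.mono' (GG_rint a.re q.re ha hq) (GG_meas a q) ?_
  exact (ae_restrict_iff' measurableSet_Ioi).2 (ae_of_all _ fun t ht => (GG_norm a q t ht).le)

lemma GG_deriv (a q : ℂ) (ha : 0 < a.re) (hq : 0 < q.re) :
    HasDerivAt (fun q => GG a q) (-GG (a + 1) q) q := by
  have key := hasDerivAt_integral_of_dominated_loc_of_deriv_le (𝕜 := ℂ)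
    (μ := volume.restrict (Set.Ioi (0:ℝ)))
    (F := fun q (u : ℝ) => (u : ℂ) ^ (a - 1) * Complex.exp (-q * u))
    (F' := fun q (u : ℝ) => -((u : ℂ) ^ (a + 1 - 1) * Complex.exp (-q * u)))
    (x₀ := q) (s := Metric.ball q (q.re / 2))
    (bound := fun u : ℝ => u ^ ((a + 1).re - 1) * Real.exp (-(q.re / 2) * u))
    (Metric.ball_mem_nhds _ (by positivity))
    (Eventually.of_forall fun q => GG_meas a q) (GG_int a q ha hq)
    (GG_meas (a+1) q).neg ?_ ?_ ?_
  · have := key.2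
    rw [integral_neg] at this
    exact this
  · refine (ae_restrict_iff' measurableSet_Ioi).2 (ae_of_all _ fun u hu q' hq' => ?_)
    rw [norm_neg, GG_norm _ _ _ hu]
    have hu' : 0 < u := hu
    gcongr
    have h1 : |(q' - q).re| ≤ ‖q' - q‖ := Complex.abs_re_le_norm _
    rw [mem_ball_iff_norm] at hq'
    have := abs_le.1 (h1.trans hq'.le)
    simp at this
    linarith
  · exact GG_rint _ _ (by simp; linarith) (by positivity)
  · refine (ae_restrict_iff' measurableSet_Ioi).2 (ae_of_all _ fun u hu q' hq' => ?_)
    have hu' : (u : ℂ) ≠ 0 := by exact_mod_cast (ne_of_gt (Set.mem_Ioi.1 hu))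
    have h1 : HasDerivAt (fun q : ℂ => Complex.exp (-q * u)) (Complex.exp (-q' * u) * (-1 * u)) q' :=
      (((hasDerivAt_id q').neg).mul_const (u:ℂ)).cexp
    refine (h1.const_mul ((u : ℂ) ^ (a - 1))).congr_deriv ?_
    rw [show a + 1 - 1 = (a - 1) + 1 by ring, Complex.cpow_add _ _ hu', Complex.cpow_one]
    ring

lemma GG_rec (a q : ℂ) (ha : 0 < a.re) (hq : 0 < q.re) : q * GG (a + 1) q = a * GG a q := by
  have ha0 : a ≠ 0 := by rintro rfl; simp at ha
  have hd : ∀ u ∈ Set.Ioi (0:ℝ), HasDerivAt (fun u : ℝ => (u:ℂ) ^ a * Complex.exp (-q * u))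
      (a * ((u : ℂ) ^ (a - 1) * Complex.exp (-q * u)) -
        q * ((u : ℂ) ^ (a + 1 - 1) * Complex.exp (-q * u))) u := by
    intro u hu
    have hu' : u ≠ 0 := ne_of_gt (Set.mem_Ioi.1 hu)
    have h1 : HasDerivAt (fun u : ℝ => (u:ℂ) ^ a) (a * (u:ℂ) ^ (a - 1)) u := by
      have := (hasDerivAt_id (u:ℂ)).cpow_const (c := a) (Or.inl (by simpa using hu))
      simpa using this.comp_ofReal
    have h2 : HasDerivAt (fun u : ℝ => Complex.exp (-q * u)) (Complex.exp (-q * u) * (-q * 1)) u :=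
      ((Complex.ofRealCLM.hasDerivAt (x := u)).const_mul (-q)).cexp
    refine (h1.mul h2).congr_deriv ?_
    rw [add_sub_cancel_right]; ring
  have i1 := (GG_int a q ha hq).const_mul a
  have i2 := (GG_int (a+1) q (by simp; linarith) hq).const_mul q
  have ht : Tendsto (fun u : ℝ => (u:ℂ) ^ a * Complex.exp (-q * u)) atTop (𝓝 0) := by
    have := tendsto_rpow_mul_exp_neg_mul_atTop_nhds_zero a.re q.re hq
    refine squeeze_zero_norm' (a := fun u => u ^ a.re * Real.exp (-q.re * u)) ?_ this
    filter_upwards [eventually_gt_atTop 0] with u hu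
    rw [norm_mul, Complex.norm_cpow_eq_rpow_re_of_pos hu, Complex.norm_exp]
    simp
  have hc : ContinuousWithinAt (fun u : ℝ => (u:ℂ) ^ a * Complex.exp (-q * u)) (Set.Ici 0) 0 := by
    refine ContinuousAt.continuousWithinAt ?_
    refine ContinuousAt.mul ?_ (by fun_prop)
    exact Complex.continuousAt_ofReal_cpow_const 0 a (Or.inl ha)
  have := integral_Ioi_of_hasDerivAt_of_tendsto hc hd (i1.sub i2) ht
  rw [integral_sub i1 i2, integral_const_mul, integral_const_mul] at this
  simp [Complex.zero_cpow ha0] at this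
  unfold GG
  simp
  linear_combination -this

lemma GG_eq (a q : ℂ) (ha : 0 < a.re) (hq : 0 < q.re) :
    GG a q = Complex.exp (-a * Complex.log q) * Complex.Gamma a := by
  have hopen : IsOpen {z : ℂ | 0 < z.re} := isOpen_lt continuous_const Complex.continuous_re
  have hconn : IsPreconnected {z : ℂ | 0 < z.re} := (convex_halfSpace_re_gt 0).isPreconnected
  have hd : ∀ z ∈ {z : ℂ | 0 < z.re},
      HasDerivAt (fun z => Complex.exp (a * Complex.log z) * GG a z) 0 z := by
    intro z hz
    have hz0 : z ≠ 0 := by rintro rfl; simp at hz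
    have h1 := ((Complex.hasDerivAt_log (Or.inl hz)).const_mul a).cexp
    refine (h1.mul (GG_deriv a z ha hz)).congr_deriv ?_
    have := GG_rec a z ha hz
    have h2 : GG (a+1) z = z⁻¹ * (a * GG a z) := by rw [← this]; field_simp
    rw [h2]; ring
  have := hopen.is_const_of_deriv_eq_zero hconn
    (fun z hz => (hd z hz).differentiableAt.differentiableWithinAt)
    (fun z hz => (hd z hz).deriv) (x := q) (y := 1) hq (by simp)
  have h1 : GG a 1 = Complex.Gamma a := by
    rw [Complex.Gamma_eq_integral ha, Complex.GammaIntegral, GG]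
    congr 1; ext u
    push_cast
    ring_nf
  simp only [Complex.log_one, mul_zero, Complex.exp_zero, one_mul, h1] at this
  rw [← this, ← mul_assoc, ← Complex.exp_add]
  simp

lemma GG_lower (a q : ℂ) (ha : 0 < a.re) :
    ∫ u in Set.Ioc (0 : ℝ) 1, (u : ℂ) ^ (a - 1) * Complex.exp (-q * u) = SS a q := by
  have key := hasSum_integral_of_dominated_convergence (μ := volume.restrict (Set.Ioc (0:ℝ) 1))
    (F := fun (m : ℕ) (u : ℝ) => (u : ℂ) ^ (a - 1) * ((-q * u) ^ m / (Nat.factorial m : ℂ)))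
    (f := fun u : ℝ => (u : ℂ) ^ (a - 1) * Complex.exp (-q * u))
    (fun m u => u ^ (a.re - 1) * (‖q‖ ^ m / (Nat.factorial m : ℝ))) ?_ ?_ ?_ ?_ ?_
  · rw [← key.tsum_eq, SS]
    congr 1; ext m
    have h1 : ∀ u ∈ Set.Ioc (0:ℝ) 1, (u : ℂ) ^ (a - 1) * ((-q * u) ^ m / (Nat.factorial m : ℂ))
        = ((-q) ^ m / (Nat.factorial m : ℂ)) * (u : ℂ) ^ (a + m - 1) := by
      intro u hu
      have hu' : (u : ℂ) ≠ 0 := by exact_mod_cast (ne_of_gt hu.1)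
      rw [show a + m - 1 = (a - 1) + m by ring, Complex.cpow_add _ _ hu', Complex.cpow_natCast,
        mul_pow]
      ring
    have h0 : a + m ≠ 0 := by
      intro h; have := congrArg Complex.re h; simp at this; 
      have : (0:ℝ) ≤ m := Nat.cast_nonneg m
      linarith
    rw [setIntegral_congr_fun measurableSet_Ioc h1, integral_const_mul,
      ← intervalIntegral.integral_of_le zero_le_one, integral_cpow]
    · simp [Complex.zero_cpow h0]
      field_simp
    · left; simp; have : (0:ℝ) ≤ m := Nat.cast_nonneg m
      linarith
  · intro m
    refine ContinuousOn.aestronglyMeasurable ?_ measurableSet_Ioc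
    intro u hu
    refine ContinuousAt.continuousWithinAt ?_
    refine ContinuousAt.mul ?_ (by fun_prop)
    exact (continuousAt_cpow_const (Or.inl (by simpa using hu.1))).comp
      Complex.continuous_ofReal.continuousAt
  · intro m
    refine (ae_restrict_iff' measurableSet_Ioc).2 (ae_of_all _ fun u hu => ?_)
    have hu0 : 0 < u := hu.1
    rw [norm_mul, Complex.norm_cpow_eq_rpow_re_of_pos hu.1, norm_div, norm_pow, norm_mul, norm_neg,
      Complex.norm_natCast, Complex.norm_real, Real.norm_of_nonneg hu.1.le]
    simp only [Complex.sub_re, Complex.one_re]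
    gcongr
    exact mul_le_of_le_one_right (norm_nonneg _) hu.2
  · exact ae_of_all _ fun u => (exp_summable_norm q).mul_left _
  · simp_rw [tsum_mul_left]
    refine Integrable.mul_const ?_ _
    exact (intervalIntegrable_iff_integrableOn_Ioc_of_le zero_le_one).1
      (intervalIntegral.intervalIntegrable_rpow' (by linarith))
  · exact ae_of_all _ fun u => (exp_hasSum (-q * u)).mul_left _

lemma exp_image : Real.exp '' Set.Ioi 0 = Set.Ioi 1 := by
  ext y; constructor
  · rintro ⟨t, ht, rfl⟩; exact Real.one_lt_exp_iff.2 ht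
  · intro hy; exact ⟨Real.log y, Real.log_pos hy, Real.exp_log (by linarith [Set.mem_Ioi.1 hy])⟩

lemma GG_upper (a q : ℂ) :
    ∫ u in Set.Ioi (1 : ℝ), (u : ℂ) ^ (a - 1) * Complex.exp (-q * u) = TT a q := by
  rw [← exp_image, integral_image_eq_integral_abs_deriv_smul measurableSet_Ioi
    (fun x _ => (Real.hasDerivAt_exp x).hasDerivWithinAt) Real.exp_injective.injOn, TT]
  congr 1; ext t
  rw [abs_of_pos (Real.exp_pos t), Complex.real_smul, Complex.cpow_def_of_ne_zero (by simp),
    ← Complex.ofReal_log (Real.exp_pos t).le, Real.log_exp, Complex.ofReal_exp, ← Complex.exp_add,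
    ← Complex.exp_add]
  ring_nf

lemma TT_base (a q : ℂ) (ha : 0 < a.re) (hq : 0 < q.re) :
    TT a q = Complex.exp (-a * Complex.log q) * Complex.Gamma a - SS a q := by
  rw [← GG_eq a q ha hq, GG, ← Set.Ioc_union_Ioi_eq_Ioi zero_le_one,
    setIntegral_union (Set.Ioc_disjoint_Ioi le_rfl) measurableSet_Ioi, GG_lower a q ha, GG_upper]
  · ring
  · exact (GG_int a q ha hq).mono_set Set.Ioc_subset_Ioi_self
  · exact (GG_int a q ha hq).mono_set (Set.Ioi_subset_Ioi zero_le_one)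

lemma TT_eq (q : ℂ) (hq : 0 < q.re) (k : ℕ) : ∀ a : ℂ,
    (∃ c : ℝ, 0 < c ∧ ∀ m : ℕ, c ≤ ‖a + m‖) → -(k : ℝ) < a.re →
    TT a q = Complex.exp (-a * Complex.log q) * Complex.Gamma a - SS a q := by
  induction k with
  | zero => intro a _ h; exact TT_base a q (by simpa using h) hq
  | succ k ih =>
    intro a hc ha
    have hc' : ∃ c : ℝ, 0 < c ∧ ∀ m : ℕ, c ≤ ‖a + 1 + m‖ := by
      obtain ⟨c, hc, h⟩ := hc
      refine ⟨c, hc, fun m => ?_⟩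
      have := h (m+1); push_cast at this
      rwa [add_assoc, add_comm 1 (m : ℂ)]
    have h1 := ih (a+1) hc' (by push_cast at ha; simp; linarith)
    have h2 := TT_rec a q hq
    have h3 := SS_rec a q hc
    have ha0 : a ≠ 0 := by
      obtain ⟨c, hc, h⟩ := hc
      rintro rfl; have := h 0; simp at this; linarith
    have hq0 : q ≠ 0 := by rintro rfl; simp at hq
    rw [Complex.Gamma_add_one a ha0] at h1
    have h4 : Complex.exp (-(a+1) * Complex.log q) = Complex.exp (-a * Complex.log q) / q := by
      rw [show -(a+1) * Complex.log q = -a * Complex.log q - Complex.log q by ring, Complex.exp_sub,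
        Complex.exp_log hq0]
    rw [h4] at h1
    apply mul_left_cancel₀ ha0
    have h5 : q * TT (a+1) q = Complex.exp (-a * Complex.log q) * (a * Complex.Gamma a)
      - q * SS (a+1) q := by rw [h1]; field_simp
    linear_combination h5 - h2 - h3

/-- modified Bessel type series -/
noncomputable def II (ν l : ℂ) : ℂ :=
  ∑' k : ℕ, Complex.exp ((ν + 2 * k) * l) / ((Nat.factorial k : ℂ) * Complex.Gamma (ν + k + 1))

lemma expand_hasSum (p q b : ℂ) (hq : 0 < q.re) :
    HasSum (fun k : ℕ => p ^ k / (Nat.factorial k : ℂ) * TT (b - k) q)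
    (∫ t in Set.Ioi (0 : ℝ), Complex.exp (b * t - q * Real.exp t) *
      Complex.exp (p * Real.exp (-t))) := by
  have key := hasSum_integral_of_dominated_convergence (μ := volume.restrict (Set.Ioi (0:ℝ)))
    (F := fun (k : ℕ) (t : ℝ) => p ^ k / (Nat.factorial k : ℂ) *
      Complex.exp ((b - k) * t - q * Real.exp t))
    (f := fun t : ℝ => Complex.exp (b * t - q * Real.exp t) *
      Complex.exp (p * Real.exp (-t)))
    (fun k t => ‖Complex.exp (b * t - q * Real.exp t)‖ * (‖p‖ ^ k / (Nat.factorial k : ℝ)))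
    ?_ ?_ ?_ ?_ ?_
  · simp only [integral_const_mul] at key
    exact key
  · intro k
    exact ((TT_cont _ _).const_mul _).aestronglyMeasurable
  · intro k
    refine (ae_restrict_iff' measurableSet_Ioi).2 (ae_of_all _ fun t ht => ?_)
    rw [norm_mul, norm_div, norm_pow, Complex.norm_natCast, mul_comm]
    gcongr
    rw [Complex.norm_exp, Complex.norm_exp]
    apply Real.exp_le_exp.2
    have : 0 ≤ (k:ℝ) * t := mul_nonneg (Nat.cast_nonneg k) (le_of_lt ht)
    simp
    linarith
  · exact ae_of_all _ fun t => (exp_summable_norm p).mul_left _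
  · simp_rw [tsum_mul_left]
    exact (TT_int b q hq).norm.mul_const _
  · refine ae_of_all _ fun t => ?_
    have := (exp_hasSum (p * Real.exp (-t))).mul_left (Complex.exp (b * t - q * Real.exp t))
    have h : ∀ k : ℕ, p ^ k / (Nat.factorial k : ℂ) * Complex.exp ((b - k) * t - q * Real.exp t)
        = Complex.exp (b * t - q * Real.exp t) *
          ((p * Real.exp (-t)) ^ k / (Nat.factorial k : ℂ)) := by
      intro k
      rw [mul_pow, Complex.ofReal_exp (-t), ← Complex.exp_nat_mul,
        show (b - k) * t - q * Real.exp t = (b * t - q * Real.exp t) + k * ((-t : ℝ) : ℂ) by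
          push_cast; ring, Complex.exp_add]
      ring
    simp only [h]
    exact this

noncomputable def DDt (τ : ℝ) (q : ℂ) (p : ℕ × ℕ) : ℂ :=
  ((-q) ^ p.1 / (Nat.factorial p.1 : ℂ)) * ((-q) ^ p.2 / (Nat.factorial p.2 : ℂ)) /
    (Complex.I * τ - p.1 + p.2)

lemma Itau_bound (τ : ℝ) (k m : ℕ) : |τ| ≤ ‖Complex.I * τ - k + m‖ := by
  have := Complex.abs_im_le_norm (Complex.I * τ - k + m)
  simpa using this

lemma DDt_summable (τ : ℝ) (hτ : τ ≠ 0) (q : ℂ) : Summable (DDt τ q) := by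
  have h1 := (exp_summable_norm q).mul_of_nonneg (exp_summable_norm q)
    (fun m => by positivity) (fun m => by positivity)
  have hτ' : 0 < |τ| := abs_pos.2 hτ
  refine Summable.of_norm_bounded (h1.mul_left |τ|⁻¹) ?_
  rintro ⟨k, m⟩
  simp only [DDt, norm_div, norm_mul, norm_pow, norm_neg, Complex.norm_natCast]
  rw [inv_mul_eq_div]
  gcongr
  exact Itau_bound τ k m

noncomputable def DD (τ : ℝ) (q : ℂ) : ℂ := ∑' p : ℕ × ℕ, DDt τ q p

lemma DD_neg (τ : ℝ) (q : ℂ) : DD (-τ) q = - DD τ q := by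
  unfold DD
  rw [← (Equiv.prodComm ℕ ℕ).tsum_eq, ← tsum_neg]
  congr 1; ext ⟨k, m⟩
  simp only [DDt, Equiv.prodComm_apply, Prod.swap, Complex.ofReal_neg]
  rw [show Complex.I * (-(τ:ℂ)) - m + k = -(Complex.I * τ - k + m) by ring, div_neg, mul_comm]

lemma Gamma_refl (τ : ℝ) (hτ : τ ≠ 0) (k : ℕ) : Complex.Gamma (Complex.I * τ - k) =
    (-1) ^ k * (Real.pi / Complex.sin (Real.pi * (Complex.I * τ))) /
      Complex.Gamma (-(Complex.I * τ) + k + 1) := by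
  have h := Complex.Gamma_mul_Gamma_one_sub (Complex.I * τ - k)
  have hne : Complex.Gamma (-(Complex.I * τ) + k + 1) ≠ 0 := by
    apply Complex.Gamma_ne_zero_of_re_pos
    simp; positivity
  rw [show 1 - (Complex.I * τ - k) = -(Complex.I * τ) + k + 1 by ring] at h
  rw [eq_div_iff hne, h, mul_sub, mul_comm (Real.pi:ℂ) k, Complex.sin_antiperiodic.sub_nat_mul_eq]
  have : ((-1:ℂ)^k)⁻¹ = (-1)^k := by rw [← inv_pow]; norm_num
  rw [div_mul_eq_div_div, div_eq_mul_inv (Real.pi:ℂ), this]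
  ring

lemma half_int (τ : ℝ) (hτ : τ ≠ 0) (q : ℂ) (hq : 0 < q.re) :
    ∫ t in Set.Ioi (0 : ℝ), Complex.exp (Complex.I * τ * t - q * Real.exp t) *
      Complex.exp (-q * Real.exp (-t)) =
    Real.pi / Complex.sin (Real.pi * (Complex.I * τ)) * II (-(Complex.I * τ)) (Complex.log q)
      - DD τ q := by
  have hq0 : q ≠ 0 := by rintro rfl; simp at hq
  have h1 := expand_hasSum (-q) q (Complex.I * τ) hq
  have hb : ∀ k : ℕ, ∃ c : ℝ, 0 < c ∧ ∀ m : ℕ, c ≤ ‖Complex.I * τ - k + m‖ := fun k =>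
    ⟨|τ|, abs_pos.2 hτ, fun m => Itau_bound τ k m⟩
  have hs : HasSum (fun k : ℕ => (-q) ^ k / (Nat.factorial k : ℂ) * SS (Complex.I * τ - k) q)
      (DD τ q) := by
    have h2 := (DDt_summable τ hτ q).hasSum
    refine h2.prod_fiberwise fun k => ?_
    have h3 := (SS_summable _ q (hb k)).hasSum.mul_left ((-q) ^ k / (Nat.factorial k : ℂ))
    have h4 : ∀ m, DDt τ q (k, m) = (-q) ^ k / (Nat.factorial k : ℂ) *
      ((-q) ^ m / ((Nat.factorial m : ℂ) * (Complex.I * τ - k + m))) := by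
      intro m
      rw [DDt]; dsimp only; rw [mul_div_assoc, div_div]
    simp only [h4]
    exact h3
  have h5 := h1.add hs
  have h6 : ∀ k : ℕ, (-q) ^ k / (Nat.factorial k : ℂ) * TT (Complex.I * τ - k) q +
      (-q) ^ k / (Nat.factorial k : ℂ) * SS (Complex.I * τ - k) q =
      Real.pi / Complex.sin (Real.pi * (Complex.I * τ)) *
      (Complex.exp ((-(Complex.I * τ) + 2 * k) * Complex.log q) /
        ((Nat.factorial k : ℂ) * Complex.Gamma (-(Complex.I * τ) + k + 1))) := by
    intro k
    rw [TT_eq q hq (k+1) _ (hb k) (by simp), Gamma_refl τ hτ k]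
    have e1 : Complex.exp ((-(Complex.I * τ) + 2 * k) * Complex.log q)
      = q ^ k * Complex.exp (-(Complex.I * τ - k) * Complex.log q) := by
      have : q ^ k = Complex.exp (k * Complex.log q) := by
        rw [Complex.exp_nat_mul, Complex.exp_log hq0]
      rw [this, ← Complex.exp_add]; ring_nf
    have e2 : (-q)^k * (-1)^k = q^k := by rw [← mul_pow]; simp
    rw [e1, ← e2]
    ring
  simp only [h6] at h5
  rw [II, ← tsum_mul_left, h5.tsum_eq]
  ring

lemma half_int_integrable (τ : ℝ) (q : ℂ) (hq : 0 < q.re) :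
    IntegrableOn (fun t : ℝ => Complex.exp (Complex.I * τ * t - q * Real.exp t) *
      Complex.exp (-q * Real.exp (-t))) (Set.Ioi 0) := by
  refine Integrable.mono' (TT_int (Complex.I * τ) q hq).norm
    (by fun_prop) (ae_of_all _ fun t => ?_)
  rw [norm_mul, Complex.norm_exp (-q * Real.exp (-t))]
  refine mul_le_of_le_one_right (norm_nonneg _) (Real.exp_le_one_iff.2 ?_)
  have := mul_pos hq (Real.exp_pos (-t))
  rw [Complex.re_mul_ofReal]
  simp only [Complex.neg_re]; linarith

lemma full_int (τ : ℝ) (hτ : τ ≠ 0) (q : ℂ) (hq : 0 < q.re) :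
    ∫ t in Set.Ioi (0 : ℝ), (Real.cos (τ * t) : ℂ) * Complex.exp (-(2 * q * Real.cosh t)) =
    Real.pi / (2 * Complex.sin (Real.pi * (Complex.I * τ))) *
      (II (-(Complex.I * τ)) (Complex.log q) - II (Complex.I * τ) (Complex.log q)) := by
  have h1 := half_int τ hτ q hq
  have h2 := half_int (-τ) (neg_ne_zero.2 hτ) q hq
  have h3 : ∀ t : ℝ, (Real.cos (τ * t) : ℂ) * Complex.exp (-(2 * q * Real.cosh t)) =
      (1/2) * (Complex.exp (Complex.I * τ * t - q * Real.exp t) *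
      Complex.exp (-q * Real.exp (-t)) + Complex.exp (Complex.I * (-τ : ℝ) * t - q * Real.exp t) *
      Complex.exp (-q * Real.exp (-t))) := by
    intro t
    rw [← Complex.exp_add, ← Complex.exp_add]
    have e1 : Complex.I * τ * t - q * Real.exp t + -q * Real.exp (-t) =
      (τ * t) * Complex.I + -(2 * q * Real.cosh t) := by
      rw [Real.cosh_eq]; push_cast; ring
    have e2 : Complex.I * (-τ : ℝ) * t - q * Real.exp t + -q * Real.exp (-t) =
      -(τ * t) * Complex.I + -(2 * q * Real.cosh t) := by
      rw [Real.cosh_eq]; push_cast; ring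
    rw [e1, e2, Complex.exp_add, Complex.exp_add (-(τ * t) * Complex.I), Complex.ofReal_cos,
      Complex.cos]
    push_cast; ring
  simp only [h3]
  rw [integral_const_mul, integral_add (half_int_integrable τ q hq)
    (half_int_integrable (-τ) q hq), h1, h2, DD_neg]
  push_cast
  rw [mul_neg, neg_neg, mul_neg, Complex.sin_neg, div_neg]
  field_simp
  ring

lemma sin_sq_image : (fun θ : ℝ => Real.sin θ ^ 2) '' Set.Ioo 0 (Real.pi / 2) = Set.Ioo 0 1 := by
  ext y; constructor
  · rintro ⟨θ, hθ, rfl⟩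
    have h1 := Real.sin_pos_of_pos_of_lt_pi hθ.1 (by linarith [hθ.2, Real.pi_pos])
    have h2 := Real.cos_pos_of_mem_Ioo ⟨by linarith [hθ.1, Real.pi_pos], hθ.2⟩
    refine ⟨by dsimp only; positivity, ?_⟩
    dsimp only
    nlinarith [Real.sin_sq_add_cos_sq θ]
  · rintro ⟨h0, h1⟩
    have hs : 0 < √y := Real.sqrt_pos.2 h0
    have hs1 : √y < 1 := by rw [Real.sqrt_lt' one_pos]; simpa using h1
    refine ⟨Real.arcsin (√y), ⟨Real.arcsin_pos.2 hs, Real.arcsin_lt_pi_div_two.2 hs1⟩, ?_⟩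
    dsimp only
    rw [Real.sin_arcsin (by linarith) hs1.le, Real.sq_sqrt h0.le]

lemma sin_sq_inj : Set.InjOn (fun θ : ℝ => Real.sin θ ^ 2) (Set.Ioo 0 (Real.pi / 2)) := by
  intro a ha b hb hab
  dsimp only at hab
  have h1 := Real.sin_pos_of_pos_of_lt_pi ha.1 (by linarith [ha.2, Real.pi_pos])
  have h2 := Real.sin_pos_of_pos_of_lt_pi hb.1 (by linarith [hb.2, Real.pi_pos])
  have h3 : Real.sin a = Real.sin b := by
    rwa [sq_eq_sq₀ h1.le h2.le] at hab
  exact Real.injOn_sin ⟨by linarith [ha.1, Real.pi_pos], ha.2.le⟩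
    ⟨by linarith [hb.1, Real.pi_pos], hb.2.le⟩ h3

lemma beta_fun (v : ℂ) (θ : ℝ) (hθ : θ ∈ Set.Ioo 0 (Real.pi / 2)) :
    |2 * Real.sin θ * Real.cos θ| • (((Real.sin θ ^ 2 : ℝ) : ℂ) ^ ((1 / 2 : ℂ) - 1) *
      (1 - ((Real.sin θ ^ 2 : ℝ) : ℂ)) ^ (v - 1)) =
    2 * Complex.exp ((2 * v - 1) * (Real.log (Real.cos θ) : ℝ)) := by
  have h1 := Real.sin_pos_of_pos_of_lt_pi hθ.1 (by linarith [hθ.2, Real.pi_pos])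
  have h2 := Real.cos_pos_of_mem_Ioo ⟨by linarith [hθ.1, Real.pi_pos], hθ.2⟩
  have e0 : (1 - ((Real.sin θ ^ 2 : ℝ) : ℂ)) = ((Real.cos θ ^ 2 : ℝ) : ℂ) := by
    rw [Real.cos_sq']; push_cast; ring
  have e1 : ∀ y : ℝ, 0 < y → ∀ w : ℂ, ((y ^ 2 : ℝ) : ℂ) ^ w
      = Complex.exp (2 * w * (Real.log y : ℝ)) := by
    intro y hy w
    rw [Complex.cpow_def_of_ne_zero (by exact_mod_cast (pow_pos hy 2).ne'),
      ← Complex.ofReal_log (by positivity), Real.log_pow]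
    push_cast; ring_nf
  rw [e0, e1 _ h1, e1 _ h2, abs_of_pos (by positivity), Complex.real_smul]
  have e2 : ∀ y : ℝ, 0 < y → (y : ℂ) = Complex.exp ((Real.log y : ℝ) : ℂ) := by
    intro y hy; rw [← Complex.ofReal_exp, Real.exp_log hy]
  push_cast
  rw [← Complex.ofReal_sin, ← Complex.ofReal_cos, e2 _ h1, e2 _ h2, mul_assoc, mul_assoc,
    ← Complex.exp_add, ← Complex.exp_add, ← Complex.exp_add]
  ring_nf

lemma sin_sq_deriv (θ : ℝ) : HasDerivAt (fun θ : ℝ => Real.sin θ ^ 2)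
    (2 * Real.sin θ * Real.cos θ) θ := by
  refine ((Real.hasDerivAt_sin θ).pow 2).congr_deriv ?_
  simp

lemma cos_int_integrable (v : ℂ) (hv : 0 < v.re) :
    IntegrableOn (fun θ : ℝ => Complex.exp ((2 * v - 1) * (Real.log (Real.cos θ) : ℝ)))
      (Set.Ioo 0 (Real.pi / 2)) := by
  have h := Complex.betaIntegral_convergent (u := 1/2) (v := v) (by norm_num) hv
  rw [intervalIntegrable_iff_integrableOn_Ioo_of_le zero_le_one, ← sin_sq_image,
    integrableOn_image_iff_integrableOn_abs_deriv_smul measurableSet_Ioo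
    (fun x _ => (sin_sq_deriv x).hasDerivWithinAt) sin_sq_inj,
    integrableOn_congr_fun (beta_fun v) measurableSet_Ioo] at h
  refine (h.const_mul (1/2)).congr (ae_of_all _ fun θ => ?_)
  dsimp only; ring

lemma cos_int_beta (v : ℂ) :
    ∫ θ in Set.Ioo 0 (Real.pi / 2), Complex.exp ((2 * v - 1) * (Real.log (Real.cos θ) : ℝ))
      = Complex.betaIntegral (1/2) v / 2 := by
  rw [Complex.betaIntegral, intervalIntegral.integral_of_le zero_le_one,
    integral_Ioc_eq_integral_Ioo, ← sin_sq_image,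
    integral_image_eq_integral_abs_deriv_smul measurableSet_Ioo
    (fun x _ => (sin_sq_deriv x).hasDerivWithinAt) sin_sq_inj,
    setIntegral_congr_fun measurableSet_Ioo (beta_fun v), integral_const_mul]
  ring

lemma cos_int (s : ℂ) (hs : 0 ≤ s.re) :
    ∫ θ in Set.Ioo 0 (Real.pi / 2), Complex.exp (2 * s * (Real.log (Real.cos θ) : ℝ))
      = (Real.pi / 2) * Complex.exp (- (2 * s * (Real.log 2 : ℝ))) * Complex.Gamma (2 * s + 1) /
        Complex.Gamma (s + 1) ^ 2 := by
  have h := cos_int_beta (s + 1/2)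
  rw [show 2 * (s + 1/2) - 1 = 2 * s by ring] at h
  have hne : Complex.Gamma (s + 1) ≠ 0 := by
    apply Complex.Gamma_ne_zero_of_re_pos; simp; linarith
  have h2 := Complex.Gamma_mul_Gamma_add_half (s + 1/2)
  rw [show s + 1/2 + 1/2 = s + 1 by ring, show 2 * (s + 1/2) = 2 * s + 1 by ring,
    show 1 - (2 * s + 1) = -(2*s) by ring] at h2
  have h3 : (2:ℂ) ^ (-(2 * s)) = Complex.exp (- (2 * s * (Real.log 2 : ℝ))) := by
    rw [Complex.cpow_def_of_ne_zero two_ne_zero]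
    congr 1
    have : Complex.log 2 = (Real.log 2 : ℝ) := by
      rw [Complex.ofReal_log (by norm_num)]; norm_num
    rw [this]; ring
  rw [h3] at h2
  rw [h, Complex.betaIntegral_eq_Gamma_mul_div _ _ (by norm_num) (by simp; linarith),
    show 1/2 + (s + 1/2) = s + 1 by ring, Complex.Gamma_one_half_eq]
  have h4 : ((Real.pi : ℂ) ^ (1/2 : ℂ)) * (√Real.pi : ℝ) = Real.pi := by
    rw [Real.sqrt_eq_rpow, Complex.ofReal_cpow Real.pi_pos.le]
    push_cast
    rw [← Complex.cpow_add _ _ (by exact_mod_cast Real.pi_ne_zero)]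
    norm_num
  have h5 : Complex.Gamma (s + 1/2) = Complex.Gamma (2 * s + 1) *
      Complex.exp (- (2 * s * (Real.log 2 : ℝ))) * (√Real.pi : ℝ) / Complex.Gamma (s + 1) := by
    rw [eq_div_iff hne, h2]
  rw [h5]
  field_simp
  linear_combination (Complex.Gamma (2 * s + 1)) * h4

lemma desc_gamma (s : ℂ) (j : ℕ) (h : (j : ℝ) ≤ s.re) :
    Complex.Gamma (s + 1) = (descPochhammer ℤ j).smeval s * Complex.Gamma (s - j + 1) := by
  induction j with
  | zero => simp
  | succ j ih =>
    push_cast at h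
    rw [ih (by linarith), descPochhammer_succ_right, Polynomial.smeval_mul]
    have hne : s - j ≠ 0 := by
      intro h0; have := congrArg Complex.re h0; simp at this; linarith
    rw [Complex.Gamma_add_one _ hne]
    push_cast
    rw [show s - (j + 1) + 1 = s - j by ring]
    simp [Polynomial.smeval_sub, Polynomial.smeval_X, Polynomial.smeval_natCast]
    ring

lemma choose_gamma (s : ℂ) (j : ℕ) (h : (j : ℝ) ≤ s.re) :
    Ring.choose s j = Complex.Gamma (s + 1) / (Nat.factorial j * Complex.Gamma (s - j + 1)) := by
  have hne : Complex.Gamma (s - j + 1) ≠ 0 := by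
    apply Complex.Gamma_ne_zero_of_re_pos; simp; linarith
  rw [Ring.choose_eq_smul, desc_gamma s j h, smul_eq_mul]
  have : (Nat.factorial j : ℂ) ≠ 0 := by exact_mod_cast Nat.factorial_ne_zero j
  field_simp

lemma vandermonde_gamma (ν : ℂ) (hν : 0 ≤ ν.re) (k : ℕ) :
    ∑ p ∈ Finset.HasAntidiagonal.antidiagonal k, (1 / ((Nat.factorial p.1 : ℂ) * Complex.Gamma (ν + p.1 + 1))) *
      (1 / ((Nat.factorial p.2 : ℂ) * Complex.Gamma (ν + p.2 + 1))) =
    Complex.Gamma (2 * (ν + k) + 1) / (Nat.factorial k * Complex.Gamma (2 * ν + k + 1) *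
      Complex.Gamma (ν + k + 1) ^ 2) := by
  have hne : Complex.Gamma (ν + k + 1) ≠ 0 := by
    apply Complex.Gamma_ne_zero_of_re_pos; simp; positivity
  have h := Ring.add_choose_eq (r := ν + k) (s := ν + k) k (Commute.all _ _)
  rw [choose_gamma (ν + k + (ν + k)) k (by simp; linarith [(Nat.cast_nonneg k : (0:ℝ) ≤ k)]),
    show ν + k + (ν + k) = 2 * (ν + k) by ring,
    show 2 * (ν + k) - k + 1 = 2 * ν + k + 1 by ring] at h
  rw [← div_div, h, Finset.sum_div]
  refine Finset.sum_congr rfl fun p hp => ?_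
  have hp' : (p.1 : ℂ) + p.2 = k := by exact_mod_cast Finset.HasAntidiagonal.mem_antidiagonal.1 hp
  have hp'' : (p.1 : ℝ) + p.2 = k := by exact_mod_cast Finset.HasAntidiagonal.mem_antidiagonal.1 hp
  have hn1 := (Nat.cast_nonneg p.1 : (0:ℝ) ≤ p.1)
  have hn2 := (Nat.cast_nonneg p.2 : (0:ℝ) ≤ p.2)
  rw [choose_gamma (ν + k) p.1 (by simp; linarith), choose_gamma (ν + k) p.2 (by simp; linarith),
    show ν + k - p.1 + 1 = ν + p.2 + 1 by rw [← hp']; ring,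
    show ν + k - p.2 + 1 = ν + p.1 + 1 by rw [← hp']; ring]
  field_simp

lemma Gamma_norm_le (ν : ℂ) (hν : 0 ≤ ν.re) (k : ℕ) :
    ‖Complex.Gamma (ν + 1)‖ ≤ ‖Complex.Gamma (ν + k + 1)‖ := by
  induction k with
  | zero => simp
  | succ k ih =>
    refine ih.trans ?_
    have h1 : 1 ≤ ‖ν + k + 1‖ := by
      refine le_trans ?_ (Complex.re_le_norm _)
      simp; positivity
    have hne : ν + k + 1 ≠ 0 := by
      intro h; rw [h, norm_zero] at h1; linarith
    push_cast
    rw [← add_assoc, Complex.Gamma_add_one _ hne, norm_mul]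
    exact le_mul_of_one_le_left (norm_nonneg _) h1

lemma II_term_bound (ν l : ℂ) (hν : 0 ≤ ν.re) (k : ℕ) :
    ‖Complex.exp ((ν + 2 * k) * l) / ((Nat.factorial k : ℂ) * Complex.Gamma (ν + k + 1))‖ ≤
    Real.exp (ν * l).re / ‖Complex.Gamma (ν + 1)‖ *
      (Real.exp (2 * l.re) ^ k / (Nat.factorial k : ℝ)) := by
  have hne : 0 < ‖Complex.Gamma (ν + 1)‖ := norm_pos_iff.2
    (Complex.Gamma_ne_zero_of_re_pos (by simp; positivity))
  have e : Complex.exp ((ν + 2 * k) * l) = Complex.exp (ν * l) * Complex.exp (2 * l) ^ k := by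
    rw [← Complex.exp_nat_mul, ← Complex.exp_add]; ring_nf
  rw [e, norm_div, norm_mul, norm_mul, norm_pow, Complex.norm_exp, Complex.norm_exp,
    Complex.norm_natCast, div_mul_div_comm]
  have e2 : (2 * l).re = 2 * l.re := by simp
  rw [e2, mul_comm ‖Complex.Gamma (ν + 1)‖]
  gcongr
  exact Gamma_norm_le ν hν k

lemma II_summable_norm (ν l : ℂ) (hν : 0 ≤ ν.re) : Summable (fun k : ℕ =>
    ‖Complex.exp ((ν + 2 * k) * l) / ((Nat.factorial k : ℂ) * Complex.Gamma (ν + k + 1))‖) :=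
  Summable.of_nonneg_of_le (fun _ => norm_nonneg _) (II_term_bound ν l hν)
    ((Real.summable_pow_div_factorial _).mul_left _)

lemma II_sq (ν l : ℂ) (hν : 0 ≤ ν.re) : II ν l ^ 2 = ∑' k : ℕ, Complex.exp ((2 * ν + 2 * k) * l) *
    (Complex.Gamma (2 * (ν + k) + 1) / (Nat.factorial k * Complex.Gamma (2 * ν + k + 1) *
      Complex.Gamma (ν + k + 1) ^ 2)) := by
  rw [II, pow_two, tsum_mul_tsum_eq_tsum_sum_antidiagonal_of_summable_norm
    (II_summable_norm ν l hν) (II_summable_norm ν l hν)]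
  congr 1; ext k
  rw [← vandermonde_gamma ν hν k, Finset.mul_sum]
  refine Finset.sum_congr rfl fun p hp => ?_
  have hp' : (p.1 : ℂ) + p.2 = k := by exact_mod_cast Finset.HasAntidiagonal.mem_antidiagonal.1 hp
  rw [show (2 * ν + 2 * k) * l = (ν + 2 * p.1) * l + (ν + 2 * p.2) * l by rw [← hp']; ring,
    Complex.exp_add]
  ring

lemma II_theta (ν l : ℂ) (hν : ν.re = 0) :
    ∫ θ in Set.Ioo 0 (Real.pi / 2), II ν (l + (Real.log (Real.cos θ) : ℝ)) =
      (Real.pi / 2) * II (ν / 2) (l - (Real.log 2 : ℝ)) ^ 2 := by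
  have key := hasSum_integral_of_dominated_convergence
    (μ := volume.restrict (Set.Ioo 0 (Real.pi / 2)))
    (F := fun (k : ℕ) (θ : ℝ) => Complex.exp ((ν + 2 * k) * (l + (Real.log (Real.cos θ) : ℝ))) /
      ((Nat.factorial k : ℂ) * Complex.Gamma (ν + k + 1)))
    (f := fun θ : ℝ => II ν (l + (Real.log (Real.cos θ) : ℝ)))
    (fun k θ => Real.exp (ν * l).re / ‖Complex.Gamma (ν + 1)‖ *
      (Real.exp (2 * l.re) ^ k / (Nat.factorial k : ℝ))) ?_ ?_ ?_ ?_ ?_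
  · rw [← key.tsum_eq, II_sq _ _ (by simp [hν]), ← tsum_mul_left]
    congr 1; ext k
    have h1 : ∀ θ : ℝ, Complex.exp ((ν + 2 * k) * (l + (Real.log (Real.cos θ) : ℝ))) /
      ((Nat.factorial k : ℂ) * Complex.Gamma (ν + k + 1)) = Complex.exp ((ν + 2 * k) * l) /
      ((Nat.factorial k : ℂ) * Complex.Gamma (ν + k + 1)) *
      Complex.exp (2 * (ν / 2 + k) * (Real.log (Real.cos θ) : ℝ)) := by
      intro θ
      rw [show (ν + 2 * k) * (l + (Real.log (Real.cos θ) : ℝ)) = (ν + 2 * k) * l +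
        2 * (ν / 2 + k) * (Real.log (Real.cos θ) : ℝ) by ring, Complex.exp_add]
      ring
    simp only [h1]
    rw [integral_const_mul, cos_int _ (by simp [hν]),
      show (2 * (ν / 2) + 2 * k) * (l - (Real.log 2 : ℝ)) = (ν + 2 * k) * l +
        -(2 * (ν / 2 + k) * (Real.log 2 : ℝ)) by ring, Complex.exp_add,
      show 2 * (ν / 2) + k + 1 = ν + k + 1 by ring]
    field_simp
  · intro k
    refine Measurable.aestronglyMeasurable ?_
    fun_prop
  · intro k
    refine (ae_restrict_iff' measurableSet_Ioo).2 (ae_of_all _ fun θ hθ => ?_)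
    refine (II_term_bound ν _ hν.ge k).trans ?_
    have h2 := Real.cos_pos_of_mem_Ioo ⟨by linarith [hθ.1, Real.pi_pos], hθ.2⟩
    have h3 : Real.log (Real.cos θ) ≤ 0 := Real.log_nonpos h2.le (Real.cos_le_one θ)
    have h4 : (ν * (l + (Real.log (Real.cos θ) : ℝ))).re = (ν * l).re := by
      rw [mul_add, Complex.add_re, Complex.re_mul_ofReal, hν]; simp
    have h5 : (l + (Real.log (Real.cos θ) : ℝ)).re ≤ l.re := by
      rw [Complex.add_re, Complex.ofReal_re]; linarith
    rw [h4]
    gcongr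
  · exact ae_of_all _ fun θ => (Real.summable_pow_div_factorial _).mul_left _
  · exact integrable_const _
  · exact ae_of_all _ fun θ => (II_summable_norm ν _ hν.ge).of_norm.hasSum

lemma natsub_norm (k m : ℕ) (h : m ≠ k) : 1 ≤ ‖(-(k:ℂ) + m)‖ := by
  have : (-(k:ℂ) + m) = (((m:ℤ) - k : ℤ) : ℂ) := by push_cast; ring
  rw [this, Complex.norm_intCast]
  have : (m:ℤ) - k ≠ 0 := by omega
  exact_mod_cast Int.one_le_abs this

lemma SSn_bound (q : ℂ) (k m : ℕ) : ‖(-q) ^ m / (Nat.factorial m * (-(k:ℂ) + m))‖ ≤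
    ‖q‖ ^ m / (Nat.factorial m : ℝ) := by
  by_cases h : m = k
  · subst h; simp; positivity
  · have := SS_term_bound (-(k:ℂ)) q 1 one_pos m (natsub_norm k m h)
    simpa using this

lemma SSn_summable (q : ℂ) (k : ℕ) :
    Summable (fun m : ℕ => (-q) ^ m / (Nat.factorial m * (-(k:ℂ) + m))) :=
  Summable.of_norm_bounded (exp_summable_norm q) (SSn_bound q k)

lemma SSn_rec (q : ℂ) (k : ℕ) :
    ((k:ℂ) + 1) * SS (-((k + 1 : ℕ):ℂ)) q = - q * SS (-(k:ℂ)) q - Complex.exp (-q)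
      + (-q) ^ (k + 1) / (Nat.factorial (k + 1) : ℂ) := by
  have h1 := (SSn_summable q k).hasSum.mul_left (-q)
  have h1' : HasSum (fun m : ℕ => (-q) ^ m * m / (Nat.factorial m * (-((k + 1 : ℕ):ℂ) + m)))
      (-q * SS (-(k:ℂ)) q) := by
    rw [← hasSum_nat_add_iff' 1]
    simp only [Finset.sum_range_one, Nat.cast_zero, mul_zero, zero_div, sub_zero]
    refine HasSum.congr_fun h1 ?_
    intro m
    have hm : (Nat.factorial m : ℂ) ≠ 0 := by exact_mod_cast Nat.factorial_ne_zero m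
    have hm' : (m : ℂ) + 1 ≠ 0 := by exact_mod_cast Nat.succ_ne_zero m
    rw [Nat.factorial_succ]
    push_cast
    rw [show (-((k:ℂ) + 1) + (m + 1)) = -(k:ℂ) + m by ring,
      show ((m:ℂ) + 1) * (Nat.factorial m) * (-(k:ℂ) + m) = (m + 1) * ((Nat.factorial m) * (-(k:ℂ) + m)) by ring,
      mul_comm _ ((m:ℂ) + 1), mul_div_mul_left _ _ hm', pow_succ]
    ring
  have h2 := (h1'.sub (exp_hasSum (-q))).add
    (hasSum_ite_eq (k + 1) ((-q) ^ (k + 1) / (Nat.factorial (k + 1) : ℂ)))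
  have h3 := (SSn_summable q (k + 1)).hasSum.mul_left ((k:ℂ) + 1)
  refine h3.unique ?_
  refine HasSum.congr_fun h2 ?_
  intro m
  have hm : (Nat.factorial m : ℂ) ≠ 0 := by exact_mod_cast Nat.factorial_ne_zero m
  by_cases h : m = k + 1
  · subst h; simp
  · have h0 : (-((k + 1 : ℕ):ℂ) + m) ≠ 0 := by
      intro h'
      have := natsub_norm (k + 1) m h
      rw [h'] at this; norm_num at this
    simp only [h, if_false, add_zero]
    field_simp
    push_cast
    ring

lemma TT_zero (q : ℝ) (hq : 0 < q) :
    TT 0 q = -Real.log q - Real.eulerMascheroniConstant - SS 0 q := by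
  have hq' : 0 < (q:ℂ).re := by simpa using hq
  -- limit of TT
  have l1 : Tendsto (fun a : ℝ => TT a q) (𝓝[>] 0) (𝓝 (TT 0 q)) := by
    unfold TT
    refine tendsto_integral_filter_of_dominated_convergence
      (fun t => ‖Complex.exp ((1:ℂ) * t - q * Real.exp t)‖) ?_ ?_ ?_ ?_
    · exact Eventually.of_forall fun a => (TT_cont _ _).aestronglyMeasurable
    · filter_upwards [Ioo_mem_nhdsGT (zero_lt_one' ℝ)] with a ha
      refine (ae_restrict_iff' measurableSet_Ioi).2 (ae_of_all _ fun t ht => ?_)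
      rw [Complex.norm_exp, Complex.norm_exp]
      apply Real.exp_le_exp.2
      have : a * t ≤ 1 * t := mul_le_mul_of_nonneg_right ha.2.le (le_of_lt ht)
      simp at this ⊢
      exact this
    · exact (TT_int 1 q hq').norm
    · refine ae_of_all _ fun t => ?_
      have : Continuous (fun a : ℝ => Complex.exp (a * t - q * Real.exp t)) := by fun_prop
      have := (this.tendsto 0).mono_left (nhdsWithin_le_nhds (s := Set.Ioi 0))
      simpa using this
  have l2 : Tendsto (fun a : ℝ => ∑' m : ℕ, (-(q:ℂ)) ^ (m + 1) / (Nat.factorial (m + 1) * ((a:ℂ) + (m + 1 : ℕ))))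
      (𝓝[>] 0) (𝓝 (SS 0 q)) := by
    have e : SS 0 q = ∑' m : ℕ, (-(q:ℂ)) ^ (m + 1) / (Nat.factorial (m + 1) * ((0:ℂ) + (m + 1 : ℕ))) := by
      unfold SS
      have := SSn_summable q 0
      simp only [Nat.cast_zero, neg_zero] at this
      rw [this.tsum_eq_zero_add]
      simp
    rw [e]
    refine tendsto_tsum_of_dominated_convergence
      (bound := fun m => ‖(q:ℂ)‖ ^ (m + 1) / (Nat.factorial (m + 1) : ℝ))
      ((summable_nat_add_iff 1).2 (exp_summable_norm q)) ?_ ?_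
    · intro m
      have hm : (Nat.factorial (m+1) : ℂ) ≠ 0 := by exact_mod_cast Nat.factorial_ne_zero _
      have hm' : (m : ℂ) + 1 ≠ 0 := by exact_mod_cast Nat.succ_ne_zero m
      have : ContinuousAt (fun a : ℝ => (-(q:ℂ)) ^ (m + 1) / (Nat.factorial (m + 1) * ((a:ℂ) + (m + 1 : ℕ)))) 0 := by
        refine ContinuousAt.div (by fun_prop) (by fun_prop) ?_
        push_cast
        simpa using ⟨Nat.factorial_ne_zero _, hm'⟩
      have := this.tendsto.mono_left (nhdsWithin_le_nhds (s := Set.Ioi 0))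
      simpa using this
    · filter_upwards [self_mem_nhdsWithin] with a ha m
      have := SS_term_bound a q 1 one_pos (m + 1) (by
        have h := Complex.re_le_norm ((a:ℂ) + (m + 1 : ℕ))
        have ha' : (0:ℝ) < a := ha
        simp at h ⊢
        have : (0:ℝ) ≤ m := Nat.cast_nonneg m
        linarith)
      simpa using this
  have l3 : Tendsto (fun a : ℝ => (a:ℂ)⁻¹ * (Complex.exp (-a * Real.log q) * Complex.Gamma (a + 1) - 1)) (𝓝[>] 0)
      (𝓝 (-Real.log q - Real.eulerMascheroniConstant)) := by
    have d0 : HasDerivAt (fun a : ℝ => ((a:ℂ) + 1)) 1 0 := by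
      exact (Complex.ofRealCLM.hasDerivAt (x := (0:ℝ))).add_const 1
    have d1 : HasDerivAt (fun a : ℝ => Complex.Gamma ((a:ℂ) + 1)) (-Real.eulerMascheroniConstant) 0 := by
      have := HasDerivAt.comp (0:ℝ) (h := fun a : ℝ => ((a:ℂ) + 1)) (h₂ := Complex.Gamma) (by simpa using Complex.hasDerivAt_Gamma_one) d0
      exact this.congr_deriv (by simp)
    have d2 : HasDerivAt (fun a : ℝ => Complex.exp (-a * Real.log q)) (-Real.log q) 0 := by
      have := ((Complex.ofRealCLM.hasDerivAt (x := (0:ℝ))).neg.mul_const (Real.log q : ℂ)).cexp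
      exact this.congr_deriv (by simp)
    have d3 := d2.mul d1
    have := d3.tendsto_slope_zero_right
    simp at this
    refine (this.congr ?_).trans ?_
    · intro a; simp
    · simp [sub_eq_add_neg]
  have e : ∀ᶠ a : ℝ in 𝓝[>] 0, TT a q = (a:ℂ)⁻¹ * (Complex.exp (-a * Real.log q) * Complex.Gamma (a + 1) - 1)
     - ∑' m : ℕ, (-(q:ℂ)) ^ (m + 1) / (Nat.factorial (m + 1) * ((a:ℂ) + (m + 1 : ℕ))) := by
    filter_upwards [self_mem_nhdsWithin] with a ha
    have ha' : (0:ℝ) < a := ha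
    have ha0 : (a:ℂ) ≠ 0 := by exact_mod_cast ha'.ne'
    rw [TT_base a q (by simpa using ha') hq', SS, Summable.tsum_eq_zero_add, Complex.Gamma_add_one _ ha0, ← Complex.ofReal_log hq.le]
    · simp; field_simp
      ring
    · refine SS_summable _ _ ⟨a, ha', fun m => ?_⟩
      have h := Complex.re_le_norm ((a:ℂ) + m)
      simp at h
      have : (0:ℝ) ≤ m := Nat.cast_nonneg m
      linarith
  exact tendsto_nhds_unique (l1.congr' e) (l3.sub l2)

lemma TT_neg (q : ℝ) (hq : 0 < q) (k : ℕ) :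
    TT (-(k:ℂ)) q = (-(q:ℂ)) ^ k / (Nat.factorial k : ℂ) *
      (-Real.log q - Real.eulerMascheroniConstant + ((harmonic k : ℚ) : ℂ)) - SS (-(k:ℂ)) q := by
  induction k with
  | zero => simpa using TT_zero q hq
  | succ k ih =>
    have h1 := TT_rec (-((k + 1 : ℕ):ℂ)) q (by simpa using hq)
    rw [show -((k + 1 : ℕ):ℂ) + 1 = -(k:ℂ) by push_cast; ring, ih] at h1
    have h2 := SSn_rec q k
    have hk' : (k : ℂ) + 1 ≠ 0 := by exact_mod_cast Nat.succ_ne_zero k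
    have hm : (Nat.factorial k : ℂ) ≠ 0 := by exact_mod_cast Nat.factorial_ne_zero _
    apply mul_left_cancel₀ hk'
    rw [mul_sub, h2, harmonic_succ, Nat.factorial_succ]
    have h3 : ((k:ℂ) + 1) * TT (-((k + 1 : ℕ):ℂ)) q = Complex.exp (-q) - q * ((-(q:ℂ)) ^ k / (Nat.factorial k : ℂ) *
      (-Real.log q - Real.eulerMascheroniConstant + ((harmonic k : ℚ) : ℂ)) - SS (-(k:ℂ)) q) := by
      rw [h1]; push_cast; ring
    rw [h3]
    push_cast
    field_simp
    ring

noncomputable def UU (q : ℝ) (p : ℕ × ℕ) : ℂ :=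
  ((q:ℂ) ^ p.1 / (Nat.factorial p.1 : ℂ)) * ((-(q:ℂ)) ^ p.2 / (Nat.factorial p.2 * (-(p.1:ℂ) + p.2)))

lemma UU_summable (q : ℝ) : Summable (UU q) := by
  have h1 := (exp_summable_norm q).mul_of_nonneg (exp_summable_norm q)
    (fun m => by positivity) (fun m => by positivity)
  refine Summable.of_norm_bounded h1 ?_
  rintro ⟨k, m⟩
  have := SSn_bound q k m
  simp only [UU]
  rw [norm_mul]
  gcongr
  rw [norm_div, norm_pow, Complex.norm_natCast]

lemma UU_hasSum (q : ℝ) : HasSum (fun k : ℕ => ((q:ℂ) ^ k / (Nat.factorial k : ℂ)) * SS (-(k:ℂ)) q)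
    (∑' p, UU q p) := by
  refine (UU_summable q).hasSum.prod_fiberwise ?_
  intro k
  have h : HasSum (fun m : ℕ => ((q:ℂ) ^ k / (Nat.factorial k : ℂ)) *
      ((-(q:ℂ)) ^ m / (Nat.factorial m * (-(k:ℂ) + m)))) (((q:ℂ) ^ k / (Nat.factorial k : ℂ)) *
      ∑' m : ℕ, ((-(q:ℂ)) ^ m / (Nat.factorial m * (-(k:ℂ) + m)))) :=
    HasSum.mul_left _ (SSn_summable q k).hasSum
  simp only [UU, SS]
  exact h

lemma harmonic_le (k : ℕ) : ((harmonic k : ℚ) : ℝ) ≤ k := by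
  induction k with
  | zero => simp
  | succ k ih =>
    rw [harmonic_succ]
    push_cast
    have : ((k:ℝ) + 1)⁻¹ ≤ 1 := by
      apply inv_le_one_of_one_le₀
      have : (0:ℝ) ≤ k := Nat.cast_nonneg k
      linarith
    linarith

lemma harmonic_nn (k : ℕ) : 0 ≤ ((harmonic k : ℚ) : ℝ) := by
  have : 0 ≤ harmonic k := by unfold harmonic; positivity
  exact_mod_cast this

lemma fac_one_le (k : ℕ) : (1:ℝ) ≤ (Nat.factorial k : ℝ) := by
  exact_mod_cast Nat.one_le_iff_ne_zero.2 (Nat.factorial_ne_zero k)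

lemma J0_summable (q : ℝ) : Summable (fun k : ℕ => (-1 : ℝ) ^ k * q ^ (2 * k) / (Nat.factorial k : ℝ) ^ 2) := by
  refine Summable.of_norm_bounded (Real.summable_pow_div_factorial (q ^ 2)) ?_
  intro k
  have h1 := fac_one_le k
  rw [norm_div, norm_mul, norm_pow, norm_neg, norm_one, one_pow, one_mul, pow_mul, norm_pow,
    Real.norm_of_nonneg (sq_nonneg q), Real.norm_of_nonneg (by positivity)]
  gcongr
  nlinarith

lemma Y0_summable (q : ℝ) : Summable (fun k : ℕ => (-1 : ℝ) ^ k * q ^ (2 * k) / (Nat.factorial k : ℝ) ^ 2 *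
    ((harmonic k : ℚ) : ℝ)) := by
  refine Summable.of_norm_bounded (Real.summable_pow_div_factorial (q ^ 2)) ?_
  intro k
  have h1 := fac_one_le k
  rw [norm_mul, norm_div, norm_mul, norm_pow, norm_neg, norm_one, one_pow, one_mul, pow_mul, norm_pow,
    Real.norm_of_nonneg (sq_nonneg q), Real.norm_of_nonneg (by positivity), Real.norm_of_nonneg (harmonic_nn k),
    div_mul_eq_mul_div, div_le_div_iff₀ (by positivity) (by positivity), mul_assoc]
  have h2 : (k:ℝ) ≤ Nat.factorial k := by exact_mod_cast Nat.self_le_factorial k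
  have h3 := (harmonic_le k).trans h2
  have h0 := harmonic_nn k
  apply mul_le_mul_of_nonneg_left _ (by positivity)
  nlinarith

lemma Y0_hasSum (w : ℝ) : HasSum (fun k : ℕ => (-1 : ℝ) ^ k * (w / 2) ^ (2 * k) / (Nat.factorial k : ℝ) ^ 2 *
    (-Real.log (w / 2) - Real.eulerMascheroniConstant + ((harmonic k : ℚ) : ℝ)))
    (-(Real.pi / 2) * besselY0 w) := by
  have h1 := (J0_summable (w / 2)).hasSum.mul_right (-Real.log (w / 2) - Real.eulerMascheroniConstant)
  have h2 := (Y0_summable (w / 2)).hasSum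
  have h3 := h1.add h2
  simp only [← mul_add] at h3
  rw [(Y0_summable (w / 2)).tsum_eq_zero_add] at h3
  have e : -(Real.pi / 2) * besselY0 w = (∑' (b : ℕ), (-1 : ℝ) ^ b * (w / 2) ^ (2 * b) / (Nat.factorial b : ℝ) ^ 2) *
            (-Real.log (w / 2) - Real.eulerMascheroniConstant) +
          ((-1) ^ 0 * (w / 2) ^ (2 * 0) / ((Nat.factorial 0 : ℕ) : ℝ) ^ 2 * ((harmonic 0 : ℚ) : ℝ) +
            ∑' (b : ℕ), (-1 : ℝ) ^ (b + 1) * (w / 2) ^ (2 * (b + 1)) / (Nat.factorial (b + 1) : ℝ) ^ 2 *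
              ((harmonic (b + 1) : ℚ) : ℝ)) := by
    have hs : (∑' (b : ℕ), (-1 : ℝ) ^ (b + 1) * (w / 2) ^ (2 * (b + 1)) / (Nat.factorial (b + 1) : ℝ) ^ 2 *
              ((harmonic (b + 1) : ℚ) : ℝ)) = - ∑' k : ℕ, (-1 : ℝ) ^ k * ((harmonic (k + 1) : ℚ) : ℝ) * (w / 2) ^ (2 * (k + 1)) /
      (Nat.factorial (k + 1) : ℝ) ^ 2 := by
      rw [← tsum_neg]
      congr 1
      ext b
      rw [pow_succ (-1 : ℝ) b]
      ring
    rw [hs, besselY0, besselJ0]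
    have := Real.pi_pos.ne'
    simp only [harmonic_zero, Rat.cast_zero, mul_zero, zero_add]
    field_simp
    ring
  rw [e]
  exact h3

lemma struve_series (w : ℝ) (hw : 0 < w) :
    (((Real.pi / 2) * struveH0 w : ℝ) : ℂ) = - ∑' p, UU (w / 2) p := by
  have hq : 0 < (((w / 2 : ℝ) : ℂ)).re := by simp; exact hw
  have h1 := expand_hasSum ((w / 2 : ℝ) : ℂ) ((w / 2 : ℝ) : ℂ) 0 hq
  have e1 : (∫ t in Set.Ioi (0 : ℝ), Complex.exp (0 * t - ((w / 2 : ℝ) : ℂ) * Real.exp t) *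
      Complex.exp (((w / 2 : ℝ) : ℂ) * Real.exp (-t))) = (((Real.pi / 2) * struveK0 w : ℝ) : ℂ) := by
    have : (Real.pi / 2) * struveK0 w = ∫ t in Set.Ioi (0 : ℝ), Real.exp (-w * Real.sinh t) := by
      unfold struveK0
      have := Real.pi_pos.ne'
      field_simp
    rw [this, ← integral_complex_ofReal]
    congr 1
    ext t
    rw [← Complex.exp_add, Complex.ofReal_exp, Real.sinh_eq]
    congr 1
    push_cast
    ring
  rw [e1] at h1
  have h2 := (Complex.hasSum_ofReal.2 (Y0_hasSum w)).sub (UU_hasSum (w / 2))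
  have h3 := h1.unique (HasSum.congr_fun h2 (fun k => by
    rw [zero_sub, TT_neg _ (by linarith) k, mul_sub]
    congr 1
    rw [neg_pow ((w / 2 : ℝ):ℂ) k]
    push_cast
    field_simp
    ring))
  have h4 : (Real.pi / 2) * struveH0 w = (Real.pi / 2) * struveK0 w + (Real.pi / 2) * besselY0 w := by
    rw [struveH0]; ring
  rw [h4, Complex.ofReal_add, h3]
  push_cast
  ring

noncomputable def EE (k m : ℕ) : ℂ := ∫ θ in Set.Ioo 0 (Real.pi / 2), Complex.exp (((k:ℂ) - m) * Complex.I * (θ:ℝ))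

lemma EE_diag (k : ℕ) : EE k k = (Real.pi / 2 : ℝ) := by
  unfold EE
  have : (0:ℝ) ≤ Real.pi / 2 := by positivity
  simp [this]

lemma EE_off (k m : ℕ) (h : k ≠ m) : EE k m = (Complex.I ^ k * (-Complex.I) ^ m - 1) / (((k:ℂ) - m) * Complex.I) := by
  unfold EE
  have hkm : ((k:ℂ) - m) ≠ 0 := sub_ne_zero.2 (by exact_mod_cast h)
  rw [← integral_Ioc_eq_integral_Ioo, ← intervalIntegral.integral_of_le (by positivity),
    integral_exp_mul_complex (mul_ne_zero hkm Complex.I_ne_zero)]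
  congr 1
  have e1 : Complex.exp (Real.pi / 2 * Complex.I) = Complex.I := Complex.exp_pi_div_two_mul_I
  have e2 : Complex.exp (-(Real.pi / 2 * Complex.I)) = -Complex.I := by rw [Complex.exp_neg, e1, Complex.inv_I]
  have : ((k:ℂ) - m) * Complex.I * ((Real.pi / 2 : ℝ):ℂ) = k * (Real.pi / 2 * Complex.I) + m * (-(Real.pi / 2 * Complex.I)) := by
    push_cast; ring
  rw [this, Complex.exp_add, Complex.exp_nat_mul, Complex.exp_nat_mul, e1, e2]
  simp

lemma theta_hasSum (q : ℝ) : HasSum (fun p : ℕ × ℕ => ((Complex.I * q) ^ p.1 / (Nat.factorial p.1 : ℂ)) *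
    ((Complex.I * q) ^ p.2 / (Nat.factorial p.2 : ℂ)) * EE p.1 p.2)
    (∫ θ in Set.Ioo 0 (Real.pi / 2), Complex.exp (Complex.I * (2 * q) * Real.cos θ)) := by
  have h0 := (exp_summable_norm q).mul_of_nonneg (exp_summable_norm q)
    (fun m => by positivity) (fun m => by positivity)
  have key := hasSum_integral_of_dominated_convergence (μ := volume.restrict (Set.Ioo 0 (Real.pi / 2)))
    (F := fun (p : ℕ × ℕ) (θ : ℝ) => ((Complex.I * q) ^ p.1 / (Nat.factorial p.1 : ℂ)) *
    ((Complex.I * q) ^ p.2 / (Nat.factorial p.2 : ℂ)) * Complex.exp (((p.1:ℂ) - p.2) * Complex.I * θ))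
    (f := fun θ : ℝ => Complex.exp (Complex.I * (2 * q) * Real.cos θ))
    (fun p θ => ‖(q:ℂ)‖ ^ p.1 / (Nat.factorial p.1 : ℝ) * (‖(q:ℂ)‖ ^ p.2 / (Nat.factorial p.2 : ℝ)))
    ?_ ?_ ?_ ?_ ?_
  · simp only [integral_const_mul] at key
    exact key
  · intro p
    exact Continuous.aestronglyMeasurable (by fun_prop)
  · intro p
    refine ae_of_all _ fun θ => ?_
    have : ‖Complex.exp (((p.1:ℂ) - p.2) * Complex.I * θ)‖ = 1 := by
      rw [Complex.norm_exp]; simp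
    rw [norm_mul, this, mul_one]
    simp
  · exact ae_of_all _ fun t => h0
  · simp
  · refine ae_of_all _ fun θ => ?_
    have h1 := exp_hasSum (Complex.I * q * Complex.exp (θ * Complex.I))
    have h2 := exp_hasSum (Complex.I * q * Complex.exp (-(θ * Complex.I)))
    have n1 : ∀ s : ℂ, Summable (fun m : ℕ => ‖s ^ m / (Nat.factorial m : ℂ)‖) := fun s => by
      simpa using exp_summable_norm s
    have hs := summable_mul_of_summable_norm (n1 (Complex.I * q * Complex.exp (θ * Complex.I)))
      (n1 (Complex.I * q * Complex.exp (-(θ * Complex.I))))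
    have h3 := HasSum.mul h1 h2 hs
    rw [← Complex.exp_add] at h3
    have e : Complex.I * q * Complex.exp (θ * Complex.I) + Complex.I * q * Complex.exp (-(θ * Complex.I)) =
        Complex.I * (2 * q) * Real.cos θ := by
      rw [Complex.ofReal_cos, Complex.cos]
      ring_nf
    rw [e] at h3
    refine HasSum.congr_fun h3 ?_
    rintro ⟨k, m⟩
    simp only
    rw [show ((k:ℂ) - m) * Complex.I * θ = k * (θ * Complex.I) + m * (-(θ * Complex.I)) by ring,
      Complex.exp_add, Complex.exp_nat_mul, Complex.exp_nat_mul, mul_pow _ (Complex.exp _), mul_pow _ (Complex.exp _)]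
    ring

lemma term_eq (q : ℝ) (k m : ℕ) :
    (((Complex.I * q) ^ k / (Nat.factorial k : ℂ)) * ((Complex.I * q) ^ m / (Nat.factorial m : ℂ)) * EE k m +
     ((Complex.I * q) ^ m / (Nat.factorial m : ℂ)) * ((Complex.I * q) ^ k / (Nat.factorial k : ℂ)) * EE m k).im
    = (-(UU q (k, m) + UU q (m, k))).re := by
  have hk : (Nat.factorial k : ℂ) ≠ 0 := by exact_mod_cast Nat.factorial_ne_zero _
  have hm : (Nat.factorial m : ℂ) ≠ 0 := by exact_mod_cast Nat.factorial_ne_zero _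
  by_cases h : k = m
  · subst h
    have : ((Complex.I * q) ^ k / (Nat.factorial k : ℂ)) * ((Complex.I * q) ^ k / (Nat.factorial k : ℂ)) * EE k k
      = (((-1) ^ k * q ^ k * q ^ k / ((Nat.factorial k : ℝ) * (Nat.factorial k : ℝ)) * (Real.pi / 2) : ℝ) : ℂ) := by
      rw [EE_diag, mul_pow]
      push_cast
      rw [← Complex.I_sq, ← pow_mul, mul_comm 2 k, pow_mul]
      ring
    rw [this, ← Complex.ofReal_add, Complex.ofReal_im]
    simp [UU]
  · have hkm : ((k:ℂ) - m) ≠ 0 := sub_ne_zero.2 (by exact_mod_cast h)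
    have hmk : ((m:ℂ) - k) ≠ 0 := sub_ne_zero.2 (by exact_mod_cast (Ne.symm h))
    have key : ((Complex.I * q) ^ k / (Nat.factorial k : ℂ)) * ((Complex.I * q) ^ m / (Nat.factorial m : ℂ)) * EE k m +
     ((Complex.I * q) ^ m / (Nat.factorial m : ℂ)) * ((Complex.I * q) ^ k / (Nat.factorial k : ℂ)) * EE m k
      = Complex.I * (-(UU q (k, m) + UU q (m, k))) := by
      have i1 : ∀ k m : ℕ, Complex.I ^ k * Complex.I ^ m * (Complex.I ^ k * (-Complex.I) ^ m) = (-1) ^ k := by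
        intro k m
        have : (-1:ℂ) ^ k = Complex.I ^ k * Complex.I ^ k := by rw [← mul_pow, Complex.I_mul_I]
        have h2 : Complex.I ^ m * (-Complex.I) ^ m = 1 := by rw [← mul_pow]; simp
        rw [this]
        linear_combination Complex.I ^ k * Complex.I ^ k * h2
      rw [EE_off k m h, EE_off m k (Ne.symm h)]
      simp only [UU]
      rw [show (-(k:ℂ) + m) = -((k:ℂ) - m) by ring, show (-(m:ℂ) + k) = ((k:ℂ) - m) by ring,
        show ((m:ℂ) - k) = -((k:ℂ) - m) by ring, mul_pow, mul_pow, neg_pow (q:ℂ) k, neg_pow (q:ℂ) m]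
      rw [← i1 k m, ← i1 m k]
      have : Complex.I ≠ 0 := Complex.I_ne_zero
      field_simp
      rw [Complex.I_sq]
      ring
    rw [key]
    simp

lemma struve_int (w : ℝ) (hw : 0 < w) :
    (Real.pi / 2) * struveH0 w =
      (∫ θ in Set.Ioo 0 (Real.pi / 2), Complex.exp (Complex.I * w * Real.cos θ)).im := by
  have h1 := theta_hasSum (w / 2)
  have h1' := (Equiv.prodComm ℕ ℕ).hasSum_iff.2 h1
  have h2 := (UU_summable (w / 2)).hasSum
  have h2' := (Equiv.prodComm ℕ ℕ).hasSum_iff.2 h2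
  have a := Complex.hasSum_im (h1.add h1')
  have b := Complex.hasSum_re (h2.add h2').neg
  have c := a.unique (HasSum.congr_fun b (fun p => term_eq (w / 2) p.1 p.2))
  have d := congrArg Complex.re (struve_series w hw)
  rw [Complex.ofReal_re] at d
  have e : (Complex.I * (2 * ((w / 2 : ℝ):ℂ))) = Complex.I * w := by push_cast; ring
  rw [e] at c
  rw [Complex.add_im, Complex.neg_re, Complex.add_re] at c
  rw [Complex.neg_re] at d
  rw [d]
  linarith

noncomputable def LL (w : ℂ) : ℂ := ∫ θ in (0:ℝ)..(Real.pi / 2), Complex.exp (-(w * Real.cos θ))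

lemma LL_eq (w : ℂ) : LL w = ∫ θ in Set.Ioo 0 (Real.pi / 2), Complex.exp (-(w * Real.cos θ)) := by
  rw [LL, intervalIntegral.integral_of_le (by positivity), integral_Ioc_eq_integral_Ioo]

lemma LL_continuous : Continuous LL := by
  unfold LL
  apply intervalIntegral.continuous_parametric_intervalIntegral_of_continuous'
  simp only [Function.uncurry_def]
  fun_prop

lemma g_norm (w : ℂ) (hw : 0 ≤ w.re) (θ : ℝ) (h0 : 0 ≤ θ) (h1 : θ ≤ Real.pi / 2) :
    ‖Complex.exp (-(w * Real.cos θ))‖ ≤ 1 := by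
  rw [Complex.norm_exp]
  apply Real.exp_le_one_iff.2
  have : 0 ≤ Real.cos θ := Real.cos_nonneg_of_neg_pi_div_two_le_of_le (by linarith [Real.pi_pos]) h1
  have := mul_nonneg hw this
  simp only [Complex.neg_re, Complex.re_mul_ofReal]
  linarith

lemma LL_triv (w : ℂ) (hw : 0 ≤ w.re) (b : ℝ) (h0 : 0 ≤ b) (h1 : b ≤ Real.pi / 2) :
    ‖∫ θ in (0:ℝ)..b, Complex.exp (-(w * Real.cos θ))‖ ≤ b := by
  have := intervalIntegral.norm_integral_le_of_norm_le_const (a := 0) (b := b) (C := 1)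
    (f := fun θ : ℝ => Complex.exp (-(w * Real.cos θ))) (by
      intro θ hθ
      rw [Set.uIoc_of_le h0] at hθ
      exact g_norm w hw θ hθ.1.le (hθ.2.trans h1))
  simpa [abs_of_nonneg h0] using this

lemma LL_tail (w : ℂ) (hw : 0 ≤ w.re) (hw0 : w ≠ 0) (η : ℝ) (h0 : 0 < η) (h1 : η ≤ Real.pi / 2) :
    ‖∫ θ in η..(Real.pi / 2), Complex.exp (-(w * Real.cos θ))‖ ≤ 2 / (‖w‖ * Real.sin η) := by
  have hsin : ∀ θ ∈ Set.uIcc η (Real.pi / 2), 0 < Real.sin θ := by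
    intro θ hθ
    rw [Set.uIcc_of_le h1] at hθ
    exact Real.sin_pos_of_pos_of_lt_pi (by linarith [hθ.1]) (by linarith [hθ.2, Real.pi_pos])
  have hr : 0 < ‖w‖ := norm_pos_iff.2 hw0
  have hsη := hsin η Set.left_mem_uIcc
  have dS : ∀ θ : ℝ, HasDerivAt (fun θ : ℝ => ((Real.sin θ : ℝ):ℂ)) (Real.cos θ : ℝ) θ := fun θ =>
    (Real.hasDerivAt_sin θ).ofReal_comp
  have dg : ∀ θ : ℝ, HasDerivAt (fun θ : ℝ => Complex.exp (-(w * Real.cos θ)))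
      (w * Real.sin θ * Complex.exp (-(w * Real.cos θ))) θ := by
    intro θ
    have := (((Real.hasDerivAt_cos θ).ofReal_comp).const_mul w).neg.cexp
    exact this.congr_deriv (by simp only [Pi.neg_apply]; push_cast; ring)
  have dF : ∀ θ ∈ Set.uIcc η (Real.pi / 2), HasDerivAt (fun θ : ℝ => Complex.exp (-(w * Real.cos θ)) / (w * Real.sin θ))
      (Complex.exp (-(w * Real.cos θ)) - Complex.exp (-(w * Real.cos θ)) * Real.cos θ / (w * Real.sin θ ^ 2)) θ := by
    intro θ hθ
    have hs : (Real.sin θ : ℂ) ≠ 0 := by exact_mod_cast (hsin θ hθ).ne'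
    have := (dg θ).div ((dS θ).const_mul w) (mul_ne_zero hw0 hs)
    refine this.congr_deriv ?_
    field_simp
  have c1 : Continuous (fun θ : ℝ => Complex.exp (-(w * Real.cos θ))) := by fun_prop
  have c2 : ContinuousOn (fun θ : ℝ => Complex.exp (-(w * Real.cos θ)) * Real.cos θ / (w * Real.sin θ ^ 2)) (Set.uIcc η (Real.pi / 2)) := by
    refine ContinuousOn.div (by fun_prop) (by fun_prop) ?_
    intro θ hθ
    have hs : (Real.sin θ : ℂ) ≠ 0 := by exact_mod_cast (hsin θ hθ).ne'
    exact mul_ne_zero hw0 (pow_ne_zero 2 hs)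
  have i1 := c1.intervalIntegrable η (Real.pi / 2) (μ := volume)
  have i2 := c2.intervalIntegrable (μ := volume)
  have f1 := intervalIntegral.integral_eq_sub_of_hasDerivAt dF (i1.sub i2)
  rw [intervalIntegral.integral_sub i1 i2] at f1
  have f2 : ‖∫ θ in η..(Real.pi / 2), Complex.exp (-(w * Real.cos θ)) * Real.cos θ / (w * Real.sin θ ^ 2)‖ ≤
      ‖w‖⁻¹ * (1 / Real.sin η - 1) := by
    have d3 : ∀ θ ∈ Set.uIcc η (Real.pi / 2), HasDerivAt (fun θ : ℝ => -(‖w‖⁻¹ * (Real.sin θ)⁻¹)) (‖w‖⁻¹ * (Real.cos θ / Real.sin θ ^ 2)) θ := by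
      intro θ hθ
      have := (((Real.hasDerivAt_sin θ).inv (hsin θ hθ).ne').const_mul ‖w‖⁻¹).neg
      exact this.congr_deriv (by ring)
    have c3 : ContinuousOn (fun θ : ℝ => ‖w‖⁻¹ * (Real.cos θ / Real.sin θ ^ 2)) (Set.uIcc η (Real.pi / 2)) := by
      refine ContinuousOn.mul (by fun_prop) (ContinuousOn.div (by fun_prop) (by fun_prop) ?_)
      intro θ hθ
      exact pow_ne_zero 2 (hsin θ hθ).ne'
    have f3 := intervalIntegral.integral_eq_sub_of_hasDerivAt d3 c3.intervalIntegrable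
    have f4 := intervalIntegral.norm_integral_le_of_norm_le (μ := volume) h1 (f := fun θ : ℝ => Complex.exp (-(w * Real.cos θ)) * Real.cos θ / (w * Real.sin θ ^ 2))
      (g := fun θ : ℝ => ‖w‖⁻¹ * (Real.cos θ / Real.sin θ ^ 2)) (ae_of_all _ fun θ hθ => by
        have hc : 0 ≤ Real.cos θ := Real.cos_nonneg_of_neg_pi_div_two_le_of_le (by linarith [Real.pi_pos, hθ.1]) hθ.2
        have hg := g_norm w hw θ (by linarith [hθ.1]) hθ.2
        rw [norm_div, norm_mul, norm_mul, norm_pow, Complex.norm_real, Complex.norm_real, Real.norm_of_nonneg hc,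
          Real.norm_eq_abs, sq_abs, inv_mul_eq_div, div_div, mul_comm ‖w‖]
        gcongr
        exact mul_le_of_le_one_left hc hg) c3.intervalIntegrable
    rw [f3] at f4
    refine f4.trans (le_of_eq ?_)
    simp
    ring
  have b1 : ‖Complex.exp (-(w * Real.cos (Real.pi / 2))) / (w * Real.sin (Real.pi / 2))‖ ≤ ‖w‖⁻¹ := by
    simp
  have b2 : ‖Complex.exp (-(w * Real.cos η)) / (w * Real.sin η)‖ ≤ ‖w‖⁻¹ * (1 / Real.sin η) := by
    have hg := g_norm w hw η h0.le h1
    rw [norm_div, norm_mul, Complex.norm_real, Real.norm_of_nonneg hsη.le, ← one_div, ← mul_div_mul_comm, one_mul]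
    gcongr
  rw [sub_eq_iff_eq_add] at f1
  rw [f1]
  refine (norm_add_le _ _).trans ((add_le_add (norm_sub_le _ _) le_rfl).trans ?_)
  refine (add_le_add (add_le_add b1 b2) f2).trans (le_of_eq ?_)
  field_simp
  ring

lemma LL_bound (w : ℂ) (hw : 0 ≤ w.re) (hw0 : w ≠ 0) : ‖LL w‖ ≤ (1 + Real.pi) / Real.sqrt ‖w‖ := by
  have hr : 0 < ‖w‖ := norm_pos_iff.2 hw0
  have hs : 0 < Real.sqrt ‖w‖ := Real.sqrt_pos.2 hr
  have hpi := Real.pi_gt_three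
  rcases le_total ‖w‖ 1 with h | h
  · have h1 := LL_triv w hw (Real.pi / 2) (by positivity) le_rfl
    rw [le_div_iff₀ hs]
    have h2 : Real.sqrt ‖w‖ ≤ 1 := Real.sqrt_le_one.2 h
    have : ‖LL w‖ * Real.sqrt ‖w‖ ≤ Real.pi / 2 * 1 := mul_le_mul h1 h2 hs.le (by positivity)
    linarith
  · have h2 : 1 ≤ Real.sqrt ‖w‖ := Real.one_le_sqrt.2 h
    set s := Real.sqrt ‖w‖ with hsdef
    have hss : ‖w‖ = s ^ 2 := (Real.sq_sqrt hr.le).symm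
    have hη : 0 < 1 / s := by positivity
    have hη1 : 1 / s ≤ Real.pi / 2 := by
      have : 1 / s ≤ 1 := by rw [div_le_one hs]; exact h2
      linarith
    have c1 : Continuous (fun θ : ℝ => Complex.exp (-(w * Real.cos θ))) := by fun_prop
    have e := intervalIntegral.integral_add_adjacent_intervals (c1.intervalIntegrable 0 (1 / s) (μ := volume))
      (c1.intervalIntegrable (1 / s) (Real.pi / 2) (μ := volume))
    rw [LL, ← e]
    have t1 := LL_triv w hw (1 / s) hη.le hη1
    have t2 := LL_tail w hw hw0 (1 / s) hη hη1
    have t3 := Real.mul_le_sin hη.le hη1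
    have t4 : 2 / (‖w‖ * Real.sin (1 / s)) ≤ Real.pi / s := by
      have : 2 / (‖w‖ * Real.sin (1 / s)) ≤ 2 / (‖w‖ * (2 / Real.pi * (1 / s))) := by gcongr
      refine this.trans (le_of_eq ?_)
      rw [hss]
      field_simp
    refine (norm_add_le _ _).trans ((add_le_add t1 (t2.trans t4)).trans (le_of_eq ?_))
    ring

lemma II_cont (ν : ℂ) (hν : 0 ≤ ν.re) : Continuous (II ν) := by
  rw [continuous_iff_continuousAt]
  intro l0
  unfold II
  refine tendsto_tsum_of_dominated_convergence
    (bound := fun k => Real.exp ((ν * l0).re + 1) / ‖Complex.Gamma (ν + 1)‖ *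
      (Real.exp (2 * (l0.re + 1)) ^ k / (Nat.factorial k : ℝ)))
    ((Real.summable_pow_div_factorial _).mul_left _) ?_ ?_
  · intro k
    have : Continuous (fun l : ℂ => Complex.exp ((ν + 2 * k) * l) / ((Nat.factorial k : ℂ) * Complex.Gamma (ν + k + 1))) := by
      fun_prop
    exact this.tendsto l0
  · have a1 : ∀ᶠ l in 𝓝 l0, (ν * l).re < (ν * l0).re + 1 := by
      have : Continuous (fun l : ℂ => (ν * l).re) := by fun_prop
      exact (this.tendsto l0).eventually_lt_const (by linarith)
    have a2 : ∀ᶠ l in 𝓝 l0, l.re < l0.re + 1 :=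
      (Complex.continuous_re.tendsto l0).eventually_lt_const (by linarith)
    filter_upwards [a1, a2] with l h1 h2 k
    refine (II_term_bound ν l hν k).trans ?_
    gcongr

lemma exp_neg_exp_le (s : ℝ) : Real.exp (-Real.exp s) ≤ Real.exp (-(1/2) * s) := by
  apply Real.exp_le_exp.2
  have h1 := Real.add_one_le_exp s
  have h2 := Real.exp_pos s
  rcases le_total s 0 with h | h <;> linarith

lemma cosh_ge (t : ℝ) : Real.exp t / 2 ≤ Real.cosh t := by
  rw [Real.cosh_eq]
  have := Real.exp_pos (-t)
  linarith

lemma exp_half_int : IntegrableOn (fun t : ℝ => Real.exp (-(1/2) * t)) (Set.Ioi 0) :=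
  integrableOn_exp_mul_Ioi (by norm_num) 0

lemma cos_half_int : IntegrableOn (fun θ : ℝ => Real.exp (-(1/2) * Real.log (Real.cos θ))) (Set.Ioo 0 (Real.pi / 2)) := by
  have := (cos_int_integrable (1/4) (by norm_num)).norm
  refine this.congr (ae_of_all _ fun θ => ?_)
  simp only [Complex.norm_exp, Complex.re_mul_ofReal]
  norm_num

lemma fub (x : ℝ) (hx : 0 < x) (c : ℂ) (hc : 0 < c.re) (τ : ℝ) :
    ∫ t in Set.Ioi (0:ℝ), (Real.cos (τ * t) : ℂ) * LL (2 * x * c * Real.cosh t) =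
    ∫ θ in Set.Ioo 0 (Real.pi / 2), ∫ t in Set.Ioi (0:ℝ),
      (Real.cos (τ * t) : ℂ) * Complex.exp (-(2 * (x * c * Real.cos θ) * Real.cosh t)) := by
  simp only [LL_eq, ← integral_const_mul]
  have hA : 0 < x * c.re := mul_pos hx hc
  rw [integral_integral_swap]
  · congr 1; ext θ
    congr 1; ext t
    congr 2
    ring
  · have hi := (exp_half_int.mul_prod cos_half_int).const_mul (Real.exp (-(1/2) * Real.log (x * c.re)))
    refine Integrable.mono' hi (Continuous.aestronglyMeasurable (by
      simp only [Function.uncurry_def]; fun_prop)) ?_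
    rw [Measure.prod_restrict]
    refine (ae_restrict_iff' (measurableSet_Ioi.prod measurableSet_Ioo)).2 (ae_of_all _ ?_)
    rintro ⟨t, θ⟩ ⟨ht, hθ⟩
    simp only [Function.uncurry_apply_pair]
    have hcos : 0 < Real.cos θ := Real.cos_pos_of_mem_Ioo ⟨by linarith [hθ.1, Real.pi_pos], hθ.2⟩
    have hs : Real.exp (Real.log (x * c.re) + t + Real.log (Real.cos θ)) ≤ 2 * (x * c.re) * Real.cosh t * Real.cos θ := by
      rw [Real.exp_add, Real.exp_add, Real.exp_log hA, Real.exp_log hcos]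
      have := cosh_ge t
      have : Real.exp t ≤ 2 * Real.cosh t := by linarith
      have := mul_le_mul_of_nonneg_left this hA.le
      have := mul_le_mul_of_nonneg_right this hcos.le
      linarith
    rw [norm_mul, ← Real.exp_add, ← Real.exp_add, Complex.norm_real]
    have h1 : ‖Real.cos (τ * t)‖ ≤ 1 := Real.abs_cos_le_one _
    refine (mul_le_of_le_one_left (norm_nonneg _) h1).trans ?_
    rw [Complex.norm_exp]
    have h2 := exp_neg_exp_le (Real.log (x * c.re) + t + Real.log (Real.cos θ))
    have e : -(1/2) * Real.log (x * c.re) + (-(1/2) * t + -(1/2) * Real.log (Real.cos θ)) =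
      -(1/2) * (Real.log (x * c.re) + t + Real.log (Real.cos θ)) := by ring
    rw [e]
    refine le_trans (Real.exp_le_exp.2 ?_) h2
    have e2 : (2 * (x:ℂ) * c * (Real.cosh t : ℝ) * (Real.cos θ : ℝ)) = c * ((2 * x * Real.cosh t * Real.cos θ : ℝ):ℂ) := by
      push_cast; ring
    rw [Complex.neg_re, e2, Complex.re_mul_ofReal]
    linarith

lemma II_bdd (ν l : ℂ) (hν : ν.re = 0) :
    IntegrableOn (fun θ : ℝ => II ν (l + (Real.log (Real.cos θ) : ℝ))) (Set.Ioo 0 (Real.pi / 2)) := by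
  have hm : Measurable (fun θ : ℝ => II ν (l + (Real.log (Real.cos θ) : ℝ))) := by
    refine (II_cont ν hν.ge).measurable.comp ?_
    fun_prop
  refine Measure.integrableOn_of_bounded (M := ∑' k : ℕ, Real.exp (ν * l).re / ‖Complex.Gamma (ν + 1)‖ *
      (Real.exp (2 * l.re) ^ k / (Nat.factorial k : ℝ))) (by simp) hm.aestronglyMeasurable ?_
  refine (ae_restrict_iff' measurableSet_Ioo).2 (ae_of_all _ fun θ hθ => ?_)
  unfold II
  refine tsum_of_norm_bounded ((Real.summable_pow_div_factorial _).mul_left _).hasSum ?_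
  intro k
  refine (II_term_bound ν _ hν.ge k).trans ?_
  have h2 := Real.cos_pos_of_mem_Ioo ⟨by linarith [hθ.1, Real.pi_pos], hθ.2⟩
  have h3 : Real.log (Real.cos θ) ≤ 0 := Real.log_nonpos h2.le (Real.cos_le_one θ)
  have h4 : (ν * (l + (Real.log (Real.cos θ) : ℝ))).re = (ν * l).re := by
    rw [mul_add, Complex.add_re, Complex.re_mul_ofReal, hν]; simp
  rw [h4]
  have h5 : (l + (Real.log (Real.cos θ) : ℝ)).re ≤ l.re := by
    rw [Complex.add_re, Complex.ofReal_re]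
    linarith
  have h6 : Real.exp (2 * (l + (Real.log (Real.cos θ) : ℝ)).re) ≤ Real.exp (2 * l.re) :=
    Real.exp_le_exp.2 (by linarith)
  gcongr

lemma main_c (x : ℝ) (hx : 0 < x) (c : ℂ) (hc : 0 < c.re) (τ : ℝ) (hτ : τ ≠ 0) :
    ∫ t in Set.Ioi (0:ℝ), (Real.cos (τ * t) : ℂ) * LL (2 * x * c * Real.cosh t) =
    Real.pi / (2 * Complex.sin (Real.pi * (Complex.I * τ))) * ((Real.pi / 2) *
      (II (-(Complex.I * τ) / 2) (Real.log x + Complex.log c - (Real.log 2 : ℝ)) ^ 2 -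
       II ((Complex.I * τ) / 2) (Real.log x + Complex.log c - (Real.log 2 : ℝ)) ^ 2)) := by
  have hc0 : c ≠ 0 := by rintro rfl; simp at hc
  rw [fub x hx c hc τ]
  have e : ∀ θ ∈ Set.Ioo (0:ℝ) (Real.pi / 2), ∫ t in Set.Ioi (0:ℝ),
      (Real.cos (τ * t) : ℂ) * Complex.exp (-(2 * (x * c * Real.cos θ) * Real.cosh t)) =
      Real.pi / (2 * Complex.sin (Real.pi * (Complex.I * τ))) *
      (II (-(Complex.I * τ)) (Real.log x + Complex.log c + (Real.log (Real.cos θ) : ℝ)) -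
       II (Complex.I * τ) (Real.log x + Complex.log c + (Real.log (Real.cos θ) : ℝ))) := by
    intro θ hθ
    have hcos : 0 < Real.cos θ := Real.cos_pos_of_mem_Ioo ⟨by linarith [hθ.1, Real.pi_pos], hθ.2⟩
    have hq : (x:ℂ) * c * Real.cos θ = ((x * Real.cos θ : ℝ) : ℂ) * c := by push_cast; ring
    have hp : 0 < x * Real.cos θ := mul_pos hx hcos
    rw [full_int τ hτ (x * c * Real.cos θ) (by
      rw [hq, Complex.re_ofReal_mul]; positivity)]
    have hl : Complex.log ((x:ℂ) * c * Real.cos θ) = Real.log x + Complex.log c + (Real.log (Real.cos θ) : ℝ) := by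
      rw [hq, Complex.log_ofReal_mul hp hc0, Real.log_mul hx.ne' hcos.ne']
      push_cast; ring
    rw [hl]
  rw [setIntegral_congr_fun measurableSet_Ioo e, integral_const_mul, integral_sub (II_bdd _ _ (by simp)) (II_bdd _ _ (by simp)),
    II_theta _ _ (by simp), II_theta _ _ (by simp)]
  ring

lemma LL_cosh_bound (x : ℝ) (hx : 0 < x) (c : ℂ) (hc : 0 ≤ c.re) (hc1 : 1 ≤ ‖c‖) (t : ℝ) :
    ‖LL (2 * x * c * Real.cosh t)‖ ≤ (1 + Real.pi) * Real.exp (-(1/2) * Real.log x) * Real.exp (-(1/2) * t) := by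
  have hch := Real.cosh_pos t
  have e : (2 * (x:ℂ) * c * Real.cosh t) = c * ((2 * x * Real.cosh t : ℝ) : ℂ) := by push_cast; ring
  have hp : 0 < 2 * x * Real.cosh t := by positivity
  have hc0 : c ≠ 0 := by rintro rfl; simp at hc1; linarith
  rw [e]
  refine (LL_bound _ (by rw [Complex.re_mul_ofReal]; positivity) (mul_ne_zero hc0 (by exact_mod_cast hp.ne'))).trans ?_
  rw [mul_assoc (1 + Real.pi), ← Real.exp_add, ← mul_add, neg_mul, Real.exp_neg, div_eq_mul_inv]
  gcongr
  rw [one_div, mul_comm, ← div_eq_mul_inv, Real.exp_half]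
  apply Real.sqrt_le_sqrt
  rw [Real.exp_add, Real.exp_log hx, norm_mul, Complex.norm_real, Real.norm_of_nonneg hp.le]
  have h1 := cosh_ge t
  have h2 : x * Real.exp t ≤ x * (2 * Real.cosh t) := by gcongr; linarith
  have h3 : 1 * (2 * x * Real.cosh t) ≤ ‖c‖ * (2 * x * Real.cosh t) := by gcongr
  linarith

lemma main_lim (x : ℝ) (hx : 0 < x) (τ : ℝ) (hτ : τ ≠ 0) :
    ∫ t in Set.Ioi (0:ℝ), (Real.cos (τ * t) : ℂ) * LL (2 * x * (-Complex.I) * Real.cosh t) =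
    Real.pi / (2 * Complex.sin (Real.pi * (Complex.I * τ))) * ((Real.pi / 2) *
      (II (-(Complex.I * τ) / 2) (Real.log x + Complex.log (-Complex.I) - (Real.log 2 : ℝ)) ^ 2 -
       II ((Complex.I * τ) / 2) (Real.log x + Complex.log (-Complex.I) - (Real.log 2 : ℝ)) ^ 2)) := by
  have hcc : Continuous (fun δ : ℝ => (δ:ℂ) - Complex.I) := by fun_prop
  have hcl : Tendsto (fun δ : ℝ => (δ:ℂ) - Complex.I) (𝓝[>] 0) (𝓝 (-Complex.I)) := by
    have := (hcc.tendsto 0).mono_left (nhdsWithin_le_nhds (s := Set.Ioi 0))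
    simpa using this
  have l1 : Tendsto (fun δ : ℝ => ∫ t in Set.Ioi (0:ℝ), (Real.cos (τ * t) : ℂ) * LL (2 * x * (δ - Complex.I) * Real.cosh t))
      (𝓝[>] 0) (𝓝 (∫ t in Set.Ioi (0:ℝ), (Real.cos (τ * t) : ℂ) * LL (2 * x * (-Complex.I) * Real.cosh t))) := by
    refine tendsto_integral_filter_of_dominated_convergence
      (fun t => (1 + Real.pi) * Real.exp (-(1/2) * Real.log x) * Real.exp (-(1/2) * t)) ?_ ?_ ?_ ?_
    · refine Eventually.of_forall fun δ => Continuous.aestronglyMeasurable ?_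
      have := LL_continuous
      fun_prop
    · filter_upwards [self_mem_nhdsWithin] with δ hδ
      refine ae_of_all _ fun t => ?_
      have hδ' : (0:ℝ) < δ := hδ
      rw [norm_mul, Complex.norm_real]
      have h1 : ‖Real.cos (τ * t)‖ ≤ 1 := Real.abs_cos_le_one _
      refine (mul_le_of_le_one_left (norm_nonneg _) h1).trans ?_
      refine LL_cosh_bound x hx _ (by simp; exact hδ'.le) ?_ t
      have := Complex.abs_im_le_norm ((δ:ℂ) - Complex.I)
      simpa using this
    · exact exp_half_int.const_mul _
    · refine ae_of_all _ fun t => ?_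
      have : Continuous (fun c : ℂ => (Real.cos (τ * t) : ℂ) * LL (2 * x * c * Real.cosh t)) := by
        have := LL_continuous
        fun_prop
      exact (this.tendsto _).comp hcl
  have hlog : Tendsto (fun δ : ℝ => Real.log x + Complex.log (δ - Complex.I) - (Real.log 2 : ℝ)) (𝓝[>] 0)
      (𝓝 (Real.log x + Complex.log (-Complex.I) - (Real.log 2 : ℝ))) := by
    have : Tendsto Complex.log (𝓝 (-Complex.I)) (𝓝 (Complex.log (-Complex.I))) :=
      (continuousAt_clog (by right; simp)).tendsto
    exact ((this.comp hcl).const_add _).sub_const _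
  have c1 := ((II_cont (-(Complex.I * τ) / 2) (by simp)).tendsto _).comp hlog
  have c2 := ((II_cont ((Complex.I * τ) / 2) (by simp)).tendsto _).comp hlog
  have l2 := (((c1.pow 2).sub (c2.pow 2)).const_mul ((Real.pi : ℂ) / 2)).const_mul
    (Real.pi / (2 * Complex.sin (Real.pi * (Complex.I * τ))))
  refine tendsto_nhds_unique (l1.congr' ?_) l2
  filter_upwards [self_mem_nhdsWithin] with δ hδ
  exact main_c x hx _ (by simpa using hδ) τ hτ

lemma II_bessel (ν : ℂ) (x : ℝ) : II ν (Real.log (x / 2) - Real.pi / 2 * Complex.I) =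
    Complex.exp (-(Real.pi / 2 * Complex.I * ν)) * besselJ ν x := by
  unfold II besselJ
  rw [← tsum_mul_left]
  congr 1; ext k
  have : (ν + 2 * k) * ((Real.log (x / 2) : ℂ) - Real.pi / 2 * Complex.I) =
    (ν + 2 * k) * (Real.log (x / 2) : ℂ) + -(Real.pi / 2 * Complex.I * ν) + k * (-(Real.pi * Complex.I)) := by ring
  rw [this, Complex.exp_add, Complex.exp_add, Complex.exp_nat_mul, Complex.exp_neg (Real.pi * Complex.I), Complex.exp_pi_mul_I]
  norm_num
  ring

lemma besselJ_conj (ν : ℂ) (x : ℝ) : besselJ ((starRingEnd ℂ) ν) x = (starRingEnd ℂ) (besselJ ν x) := by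
  unfold besselJ
  rw [Complex.conj_tsum]
  congr 1; ext k
  simp only [map_div₀, map_mul, map_pow, map_neg, map_one, ← Complex.exp_conj, ← Complex.Gamma_conj, map_add,
    Complex.conj_ofReal, map_natCast, map_ofNat]

lemma final_aux (J : ℂ) (a : ℝ) (ha : a ≠ 0) :
    ((Real.pi : ℂ) / (2 * Complex.sin (Real.pi * (Complex.I * a))) * ((Real.pi / 2) *
      ((Complex.exp (-(Real.pi * a / 4)) * (starRingEnd ℂ) J) ^ 2 - (Complex.exp (Real.pi * a / 4) * J) ^ 2))).im
    = Real.pi ^ 2 / 4 * ((J ^ 2).re / Real.cosh (Real.pi * a / 2)) := by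
  have hs : Complex.sin (Real.pi * (Complex.I * a)) = ((Real.sinh (Real.pi * a) : ℝ) : ℂ) * Complex.I := by
    rw [show (Real.pi * (Complex.I * a) : ℂ) = ((Real.pi * a : ℝ) : ℂ) * Complex.I by push_cast; ring, Complex.sin_mul_I,
      Complex.ofReal_sinh]
  have hsh : Real.sinh (Real.pi * a) = 2 * Real.sinh (Real.pi * a / 2) * Real.cosh (Real.pi * a / 2) := by
    rw [← Real.sinh_two_mul]; congr 1; ring
  have h0 : Real.sinh (Real.pi * a / 2) ≠ 0 := by
    rw [Ne, Real.sinh_eq_zero]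
    have := Real.pi_pos.ne'
    positivity
  have hc0 := (Real.cosh_pos (Real.pi * a / 2)).ne'
  have e1 : (Complex.exp (-(Real.pi * a / 4)) * (starRingEnd ℂ) J) ^ 2 = ((Real.exp (-(Real.pi * a / 2)) : ℝ) : ℂ) * (starRingEnd ℂ) (J ^ 2) := by
    rw [mul_pow, ← Complex.exp_nat_mul, map_pow, Complex.ofReal_exp]
    congr 2; push_cast; ring
  have e2 : (Complex.exp (Real.pi * a / 4) * J) ^ 2 = ((Real.exp (Real.pi * a / 2) : ℝ) : ℂ) * (J ^ 2) := by
    rw [mul_pow, ← Complex.exp_nat_mul, Complex.ofReal_exp]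
    congr 2; push_cast; ring
  rw [hs, e1, e2, hsh]
  generalize J ^ 2 = Z
  have e3 : (Real.pi : ℂ) / (2 * (((2 * Real.sinh (Real.pi * a / 2) * Real.cosh (Real.pi * a / 2) : ℝ) : ℂ) * Complex.I)) * ((Real.pi / 2) *
      (((Real.exp (-(Real.pi * a / 2)) : ℝ) : ℂ) * (starRingEnd ℂ) Z - ((Real.exp (Real.pi * a / 2) : ℝ) : ℂ) * Z)) =
      ((Real.pi ^ 2 / (8 * Real.sinh (Real.pi * a / 2) * Real.cosh (Real.pi * a / 2)) : ℝ) : ℂ) *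
      (-Complex.I * (((Real.exp (-(Real.pi * a / 2)) : ℝ) : ℂ) * (starRingEnd ℂ) Z - ((Real.exp (Real.pi * a / 2) : ℝ) : ℂ) * Z)) := by
    rw [← Complex.inv_I]
    push_cast
    field_simp
    ring
  rw [e3, Complex.im_ofReal_mul]
  have e4 : (-Complex.I * (((Real.exp (-(Real.pi * a / 2)) : ℝ) : ℂ) * (starRingEnd ℂ) Z - ((Real.exp (Real.pi * a / 2) : ℝ) : ℂ) * Z)).im
     = 2 * Real.sinh (Real.pi * a / 2) * Z.re := by
    rw [Complex.mul_im, Complex.sub_re, Complex.re_ofReal_mul, Complex.re_ofReal_mul]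
    simp only [Complex.neg_re, Complex.I_re, Complex.neg_im, Complex.I_im, Complex.conj_re]
    rw [Real.sinh_eq]
    ring
  rw [e4]
  field_simp
  ring

theorem statement7 (x : ℝ) (hx : 0 < x) (n : ℕ) (hn : 1 ≤ n) :
    IntegrableOn (fun t : ℝ => Real.cos (n * t) * struveH0 (2 * x * Real.cosh t))
      (Set.Ioi (0 : ℝ)) ∧
    ((besselJ (Complex.I * n / 2) x) ^ 2).re / Real.cosh (Real.pi * n / 2)
      = (2 / Real.pi) * ∫ t in Set.Ioi (0 : ℝ),
          Real.cos (n * t) * struveH0 (2 * x * Real.cosh t) := by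
  have hn0 : (n:ℝ) ≠ 0 := by positivity
  have hpi := Real.pi_pos.ne'
  have hI : IntegrableOn (fun t : ℝ => (Real.cos (n * t) : ℂ) * LL (2 * x * (-Complex.I) * Real.cosh t)) (Set.Ioi 0) := by
    refine Integrable.mono' (exp_half_int.const_mul ((1 + Real.pi) * Real.exp (-(1/2) * Real.log x)))
      (Continuous.aestronglyMeasurable (by have := LL_continuous; fun_prop)) (ae_of_all _ fun t => ?_)
    rw [norm_mul, Complex.norm_real]
    have h1 : ‖Real.cos (n * t)‖ ≤ 1 := Real.abs_cos_le_one _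
    refine (mul_le_of_le_one_left (norm_nonneg _) h1).trans ?_
    exact LL_cosh_bound x hx _ (by simp) (by simp) t
  have hH : ∀ t : ℝ, ((Real.cos (n * t) : ℂ) * LL (2 * x * (-Complex.I) * Real.cosh t)).im =
      (Real.pi / 2) * (Real.cos (n * t) * struveH0 (2 * x * Real.cosh t)) := by
    intro t
    have hch := Real.cosh_pos t
    have := struve_int (2 * x * Real.cosh t) (by positivity)
    rw [Complex.im_ofReal_mul, mul_left_comm, this, LL_eq]
    congr 4
    ext θ
    congr 1
    push_cast
    ring
  have hIm : IntegrableOn (fun t : ℝ => (Real.pi / 2) * (Real.cos (n * t) * struveH0 (2 * x * Real.cosh t))) (Set.Ioi 0) := by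
    have := hI.im
    refine this.congr (ae_of_all _ fun t => ?_)
    exact hH t
  refine ⟨?_, ?_⟩
  · have := hIm.const_mul (2 / Real.pi)
    refine this.congr (ae_of_all _ fun t => ?_)
    simp only
    field_simp
  · have h1 := congrArg Complex.im (main_lim x hx n hn0)
    have h2 : (∫ t in Set.Ioi (0:ℝ), (Real.cos (n * t) : ℂ) * LL (2 * x * (-Complex.I) * Real.cosh t)).im =
        (Real.pi / 2) * ∫ t in Set.Ioi (0 : ℝ), Real.cos (n * t) * struveH0 (2 * x * Real.cosh t) := by
      have := integral_im hI
      rw [← integral_const_mul]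
      simp only [← hH]
      exact this.symm
    rw [h2] at h1
    have hl : (Real.log x + Complex.log (-Complex.I) - (Real.log 2 : ℝ) : ℂ) = Real.log (x / 2) - Real.pi / 2 * Complex.I := by
      rw [Complex.log_neg_I, Real.log_div hx.ne' (by norm_num)]
      push_cast; ring
    have hcj : besselJ (-(Complex.I * (n:ℝ)) / 2) x = (starRingEnd ℂ) (besselJ (Complex.I * n / 2) x) := by
      rw [← besselJ_conj]
      congr 1
      simp [Complex.conj_ofNat]
    rw [hl, II_bessel, II_bessel, hcj] at h1
    have h3 := final_aux (besselJ (Complex.I * n / 2) x) n hn0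
    have e1 : -((Real.pi : ℂ) / 2 * Complex.I * (-(Complex.I * (n:ℝ)) / 2)) = -(Real.pi * (n:ℝ) / 4) := by
      linear_combination ((Real.pi : ℂ) * n / 4) * Complex.I_sq
    have e2 : -((Real.pi : ℂ) / 2 * Complex.I * ((Complex.I * (n:ℝ)) / 2)) = (Real.pi * (n:ℝ) / 4) := by
      linear_combination (-(Real.pi : ℂ) * n / 4) * Complex.I_sq
    rw [e1, e2] at h1
    simp only [Complex.ofReal_natCast] at h1 h3
    rw [h3] at h1
    field_simp at h1 ⊢
    linarith
end

section
/- Let M ≥ 0 be a constant such that √u · |Y₀(u)| ≤ M for all u > 0. Then for every x > 0 and every n ∈ ℕ, n ≥ 1, |Re[J_{in/2}(x)²]| / cosh(πn/2) ≤ (1/2) · ( J₀(x)² + Y₀(x)² + Γ(1/4)² · M / (π·√(πx)) ). -/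
open MeasureTheory Filter Topology

lemma bes_J0two : 2/9 ≤ besselJ0 2 := by
  have hanti : Antitone (fun k : ℕ => (1:ℝ) / (k.factorial : ℝ)^2) := by
    intro a b h
    have := Nat.factorial_le h
    have h0 : (0:ℝ) < a.factorial := by positivity
    simp only
    gcongr
  have hsum : Summable (fun k : ℕ => (-1:ℝ)^k * ((1:ℝ) / (k.factorial : ℝ)^2)) := by
    apply Summable.of_norm_bounded (Real.summable_pow_div_factorial 1)
    intro k
    have h1 : (1:ℝ) ≤ k.factorial := by exact_mod_cast Nat.one_le_iff_ne_zero.2 (Nat.factorial_ne_zero k)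
    simp only [norm_mul, norm_pow, norm_neg, norm_one, one_pow, one_mul, norm_div, Real.norm_natCast]
    gcongr
    nlinarith
  have := hanti.alternating_series_le_tendsto hsum.hasSum.tendsto_sum_nat 2
  have e : besselJ0 2 = ∑' k : ℕ, (-1:ℝ)^k * ((1:ℝ) / (k.factorial : ℝ)^2) := by
    unfold besselJ0
    congr 1; ext k; norm_num; rfl
  rw [e]
  refine le_trans ?_ this
  norm_num [Finset.sum_range_succ, Nat.factorial]

lemma bes_Y0two : 0.78 * (2 / Real.pi) ≤ besselY0 2 := by
  have hrec : ∀ k : ℕ, ((harmonic (k+2) : ℚ) : ℝ) = ((harmonic (k+1) : ℚ) : ℝ) + 1/((k:ℝ)+2) := by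
    intro k
    rw [harmonic_succ]; push_cast; rw [one_div]; ring_nf
  have hge : ∀ k : ℕ, 1 ≤ ((harmonic (k+1) : ℚ) : ℝ) ∧ ((harmonic (k+1) : ℚ) : ℝ) ≤ k+1 := by
    intro k
    induction k with
    | zero => norm_num [harmonic_succ]
    | succ k ih =>
      rw [hrec k]
      have h1 : 1/((k:ℝ)+2) ≤ 1 := by rw [div_le_one (by positivity)]; linarith [Nat.cast_nonneg (α := ℝ) k]
      have h2 : 0 ≤ 1/((k:ℝ)+2) := by positivity
      push_cast
      constructor <;> linarith
  have hanti : Antitone (fun k : ℕ => ((harmonic (k + 1) : ℚ) : ℝ) / ((k+1).factorial : ℝ)^2) := by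
    apply antitone_nat_of_succ_le
    intro k
    rw [Nat.factorial_succ (k+1), hrec k]
    have h1 : 1/((k:ℝ)+2) ≤ 1 := by rw [div_le_one (by positivity)]; linarith [Nat.cast_nonneg (α := ℝ) k]
    have h0 : (0:ℝ) < (k+1).factorial := by positivity
    obtain ⟨h2, -⟩ := hge k
    push_cast
    rw [div_le_div_iff₀ (by positivity) (by positivity), mul_pow]
    have h4 : (4:ℝ) ≤ ((k:ℝ)+1+1)^2 := by nlinarith [Nat.cast_nonneg (α := ℝ) k]
    have h5 : ((harmonic (k+1) : ℚ) : ℝ) + 1/((k:ℝ)+2) ≤ ((harmonic (k+1) : ℚ) : ℝ) * ((k:ℝ)+1+1)^2 := by nlinarith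
    rw [← mul_assoc]
    gcongr
  have hsum : Summable (fun k : ℕ => (-1:ℝ)^k * (((harmonic (k + 1) : ℚ) : ℝ) / ((k+1).factorial : ℝ)^2)) := by
    apply Summable.of_norm_bounded (Real.summable_pow_div_factorial 1)
    intro k
    obtain ⟨h2, h3⟩ := hge k
    have h1 : (1:ℝ) ≤ k.factorial := by exact_mod_cast Nat.one_le_iff_ne_zero.2 (Nat.factorial_ne_zero k)
    simp only [norm_mul, norm_pow, norm_neg, norm_one, one_pow, one_mul, norm_div, Real.norm_natCast]
    rw [Real.norm_of_nonneg (by linarith), Nat.factorial_succ]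
    push_cast
    rw [div_le_div_iff₀ (by positivity) (by positivity)]
    have hk := Nat.cast_nonneg (α := ℝ) k
    calc ((harmonic (k+1) : ℚ) : ℝ) * (k.factorial:ℝ) ≤ (k+1) * k.factorial := by gcongr
      _ ≤ 1 * (((k:ℝ)+1) * k.factorial)^2 := by
        have : 1 ≤ ((k:ℝ)+1) * k.factorial := by nlinarith
        nlinarith
  have := hanti.alternating_series_le_tendsto hsum.hasSum.tendsto_sum_nat 2
  have e : (∑' k : ℕ, (-1 : ℝ) ^ k * ((harmonic (k + 1) : ℚ) : ℝ) * ((2:ℝ) / 2) ^ (2 * (k + 1)) /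
      (Nat.factorial (k + 1) : ℝ) ^ 2) = ∑' k : ℕ, (-1:ℝ)^k * (((harmonic (k + 1) : ℚ) : ℝ) / ((k+1).factorial : ℝ)^2) := by
    congr 1; ext k; rw [div_self two_ne_zero, one_pow]; ring
  unfold besselY0
  rw [e, mul_comm]
  have h6 := bes_J0two
  have h7 := Real.one_half_lt_eulerMascheroniConstant
  have h8 : 0.67 ≤ ∑' k : ℕ, (-1:ℝ)^k * (((harmonic (k + 1) : ℚ) : ℝ) / ((k+1).factorial : ℝ)^2) := by
    refine le_trans ?_ this
    norm_num [Finset.sum_range_succ, Nat.factorial, harmonic_succ]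
  have h9 : Real.log (2/2) = 0 := by norm_num
  rw [h9]
  gcongr
  nlinarith

lemma bes_pow_deriv (c : ℕ → ℂ) (A : ℝ) (hc : ∀ k, ‖c k‖ ≤ A / k.factorial) :
    (∀ k : ℕ, ‖((k:ℂ)+1) * c (k+1)‖ ≤ A / k.factorial) ∧ (∀ z : ℂ, Summable (fun k => c k * z^k)) ∧
    ∀ z : ℂ, HasDerivAt (fun z => ∑' k, c k * z^k) (∑' k : ℕ, ((k:ℂ)+1) * c (k+1) * z^k) z := by
  have hA : 0 ≤ A := by simpa using (norm_nonneg _).trans (hc 0)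
  have h1 : ∀ k : ℕ, ‖((k:ℂ)+1) * c (k+1)‖ ≤ A / k.factorial := by
    intro k
    have := hc (k+1)
    rw [norm_mul]
    have e : ‖((k:ℂ)+1)‖ = (k:ℝ)+1 := by
      have : ((k:ℂ)+1) = ((k+1 : ℕ) : ℂ) := by push_cast; rfl
      rw [this, Complex.norm_natCast]; push_cast; rfl
    rw [e]
    calc ((k:ℝ)+1) * ‖c (k+1)‖ ≤ ((k:ℝ)+1) * (A / (k+1).factorial) := by gcongr
      _ = A / k.factorial := by rw [Nat.factorial_succ]; push_cast; field_simp
  have h2 : ∀ d : ℕ → ℂ, (∀ k, ‖d k‖ ≤ A / k.factorial) → ∀ R : ℝ, ∀ z : ℂ, ‖z‖ ≤ R → ∀ k, ‖d k * z^k‖ ≤ A * (R^k / k.factorial) := by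
    intro d hd R z hz k
    rw [norm_mul, norm_pow]
    have := hd k
    calc ‖d k‖ * ‖z‖^k ≤ (A / k.factorial) * R^k := by gcongr
      _ = _ := by ring
  have hs : ∀ d : ℕ → ℂ, (∀ k, ‖d k‖ ≤ A / k.factorial) → ∀ z : ℂ, Summable (fun k => d k * z^k) := fun d hd z =>
    Summable.of_norm_bounded ((Real.summable_pow_div_factorial ‖z‖).mul_left A) (h2 d hd _ z le_rfl)
  refine ⟨h1, hs c hc, fun z => ?_⟩
  set R := ‖z‖ + 1 with hR
  have hzt : z ∈ Metric.ball (0:ℂ) R := by simp [hR]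
  set u : ℕ → ℝ := fun k => Nat.casesOn k 0 (fun k => A * (R^k / k.factorial)) with hu
  have hus : Summable u := by
    rw [← summable_nat_add_iff 1]
    exact (Real.summable_pow_div_factorial R).mul_left A
  have key := hasDerivAt_tsum_of_isPreconnected (g := fun k z => c k * z^k) (g' := fun k z => c k * ((k:ℂ) * z^(k-1)))
    (u := u) (t := Metric.ball (0:ℂ) R) (y₀ := z) (y := z) hus Metric.isOpen_ball (convex_ball (0:ℂ) R).isPreconnected
    (fun k y _ => (hasDerivAt_pow k y).const_mul (c k)) ?_ hzt (hs c hc z) hzt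
  · refine key.congr_deriv ?_
    have hss : Summable (fun k : ℕ => c k * ((k:ℂ) * z^(k-1))) := by
      rw [← summable_nat_add_iff 1]
      refine (hs _ h1 z).congr fun k => ?_
      simp only [Nat.add_sub_cancel]; push_cast; ring
    rw [hss.tsum_eq_zero_add]
    simp
    congr 1; ext k; ring
  · intro k y hy
    have hy' : ‖y‖ ≤ R := by simpa using (Metric.mem_ball.1 hy).le
    cases k with
    | zero => simp [hu]
    | succ k =>
      have := h2 _ h1 R y hy' k
      simp only [hu]
      refine le_trans (le_of_eq ?_) this
      congr 1; simp only [Nat.add_sub_cancel]; push_cast; ring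

lemma bes_energy (τ : ℝ) (hτ : 1/2 ≤ τ) (f g : ℝ → ℝ) (hf : ∀ s, HasDerivAt f (g s) s)
    (hg : ∀ s, HasDerivAt g (-(τ^2 + 4 * Real.exp (2*s)) * f s) s) (K : ℝ)
    (hlim : Tendsto (fun s => (f s)^2 + (g s)^2 / (τ^2 + 4 * Real.exp (2*s))) atBot (𝓝 K))
    (s0 : ℝ) (hs0 : 4 * Real.exp (2*s0) = τ^2 + 1/16) (s : ℝ) :
    Real.exp (s/2) * (f s)^2 ≤ Real.exp (s0/2) * (4/3 * K) := by
  have hQpos : ∀ s, 0 < τ^2 + 4 * Real.exp (2*s) := fun s => by positivity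
  have hexp : ∀ s, HasDerivAt (fun s : ℝ => Real.exp (2*s)) (2 * Real.exp (2*s)) s := fun s => by
    have := ((hasDerivAt_id s).const_mul 2).exp
    simpa [mul_comm] using this
  have hQ : ∀ s, HasDerivAt (fun s : ℝ => τ^2 + 4 * Real.exp (2*s)) (8 * Real.exp (2*s)) s := fun s => by
    have := ((hexp s).const_mul 4).const_add (τ^2)
    exact this.congr_deriv (by ring)
  have hE1 : ∀ s, HasDerivAt (fun s => (f s)^2 + (g s)^2 / (τ^2 + 4 * Real.exp (2*s)))
      (-(g s)^2 * (8 * Real.exp (2*s)) / (τ^2 + 4 * Real.exp (2*s))^2) s := fun s => by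
    have := ((hf s).pow 2).add (((hg s).pow 2).div (hQ s) (hQpos s).ne')
    have hne := (hQpos s).ne'
    refine this.congr_deriv ?_
    try simp only [Pi.pow_apply]
    field_simp
    ring
  have hanti : Antitone (fun s => (f s)^2 + (g s)^2 / (τ^2 + 4 * Real.exp (2*s))) := by
    apply antitone_of_deriv_nonpos (fun s => (hE1 s).differentiableAt)
    intro s
    rw [(hE1 s).deriv]
    have : 0 ≤ (g s)^2 * (8 * Real.exp (2*s)) / (τ^2 + 4 * Real.exp (2*s))^2 := by positivity
    have e : -(g s)^2 * (8 * Real.exp (2*s)) / (τ^2 + 4 * Real.exp (2*s))^2 = -((g s)^2 * (8 * Real.exp (2*s)) / (τ^2 + 4 * Real.exp (2*s))^2) := by ring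
    linarith
  have hle : ∀ s, (f s)^2 + (g s)^2 / (τ^2 + 4 * Real.exp (2*s)) ≤ K := fun s =>
    ge_of_tendsto hlim (by filter_upwards [eventually_le_atBot s] with t ht using hanti ht)
  have hfK : ∀ s, (f s)^2 ≤ K := fun s => by
    have := hle s
    have : 0 ≤ (g s)^2 / (τ^2 + 4 * Real.exp (2*s)) := by have := hQpos s; positivity
    linarith
  have hK : 0 ≤ K := (sq_nonneg _).trans (hfK 0)
  rcases le_total s s0 with h | h
  · have h1 : Real.exp (s/2) ≤ Real.exp (s0/2) := Real.exp_le_exp.2 (by linarith)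
    have h2 := hfK s
    gcongr
    linarith
  · have hexp2 : ∀ s, HasDerivAt (fun s : ℝ => Real.exp (s/2)) (Real.exp (s/2) / 2) s := fun s => by
      have := ((hasDerivAt_id s).div_const 2).exp
      simpa [div_eq_mul_inv] using this
    have hE2 : ∀ s, HasDerivAt (fun s => Real.exp (s/2) * ((f s)^2 + (g s + f s/4)^2 / (τ^2 + 4 * Real.exp (2*s) + 1/16)))
      (Real.exp (s/2) * (g s + f s/4)^2 * (τ^2 + 1/16 - 4 * Real.exp (2*s)) / (τ^2 + 4 * Real.exp (2*s) + 1/16)^2) s := fun s => by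
      have hne : τ^2 + 4 * Real.exp (2*s) + 1/16 ≠ 0 := by have := hQpos s; positivity
      have := (hexp2 s).mul (((hf s).pow 2).add ((((hg s).add ((hf s).div_const 4)).pow 2).div ((hQ s).add_const (1/16)) hne))
      refine this.congr_deriv ?_
      try simp only [Pi.pow_apply, Pi.add_apply, Pi.div_apply]
      generalize Real.exp (2*s) = z at *
      have e : τ^2 = (τ^2 + 4 * z + 1/16) - 4*z - 1/16 := by ring
      generalize τ^2 + 4 * z + 1/16 = q at *
      rw [e]
      field_simp
      ring
    have hanti2 : AntitoneOn (fun s => Real.exp (s/2) * ((f s)^2 + (g s + f s/4)^2 / (τ^2 + 4 * Real.exp (2*s) + 1/16))) (Set.Ici s0) := by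
      apply antitoneOn_of_deriv_nonpos (convex_Ici s0) (fun s _ => (hE2 s).continuousAt.continuousWithinAt) (fun s _ => (hE2 s).differentiableAt.differentiableWithinAt)
      intro s hs
      rw [interior_Ici] at hs
      rw [(hE2 s).deriv]
      have h1 : Real.exp (2*s0) ≤ Real.exp (2*s) := Real.exp_le_exp.2 (by have := Set.mem_Ioi.1 hs; linarith)
      apply div_nonpos_of_nonpos_of_nonneg _ (by positivity)
      apply mul_nonpos_of_nonneg_of_nonpos (by positivity)
      linarith
    have h3 := hanti2 (Set.mem_Ici.2 le_rfl) (Set.mem_Ici.2 h) h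
    simp only at h3
    have h4 : Real.exp (s/2) * (f s)^2 ≤ Real.exp (s/2) * ((f s)^2 + (g s + f s/4)^2 / (τ^2 + 4 * Real.exp (2*s) + 1/16)) := by
      have : 0 ≤ (g s + f s/4)^2 / (τ^2 + 4 * Real.exp (2*s) + 1/16) := by have := hQpos s; positivity
      gcongr; linarith
    refine h4.trans (h3.trans ?_)
    gcongr
    have h5 := hle s0
    have hQ0 : 9/16 ≤ τ^2 + 4 * Real.exp (2*s0) := by nlinarith
    generalize τ^2 + 4 * Real.exp (2*s0) = q at *
    have hq : 0 < q := by linarith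
    refine le_trans ?_ (mul_le_mul_of_nonneg_left h5 (by norm_num))
    obtain ⟨r, hr, rfl⟩ : ∃ r, 0 < r ∧ q = r^2 := ⟨√q, by positivity, (Real.sq_sqrt hq.le).symm⟩
    obtain ⟨y, hy⟩ : ∃ y, g s0 = r * y := ⟨g s0 / r, by field_simp⟩
    rw [hy]
    have e1 : (r*y)^2 / r^2 = y^2 := by field_simp
    rw [e1]
    generalize f s0 = F
    have : (r * y + F/4)^2 / (r^2 + 1/16) ≤ 4/3 * (F^2 + y^2) - F^2 := by
      rw [div_le_iff₀ (by positivity)]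
      have hr34 : 3/4 ≤ r := by nlinarith
      have hA : 0 < r^2/3 - 1/24 := by nlinarith
      have key : 0 ≤ 4*(r^2/3-1/24) * (F^2*(r^2/3-1/24) + y^2*(r^2/3+1/12) - r*y*F/2) := by
        have : 0 ≤ 4*(r^2/3-1/24)*(r^2/3+1/12) - r^2/4 := by nlinarith [mul_self_nonneg (r^2-9/16), mul_nonneg (sub_nonneg.2 hQ0) (sub_nonneg.2 hQ0)]
        nlinarith [sq_nonneg (2*(r^2/3-1/24)*F - r*y/2), mul_nonneg this (sq_nonneg y)]
      have key2 := nonneg_of_mul_nonneg_right key (by positivity)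
      nlinarith [key2]
    linarith

lemma bes_gamma : 9/8 * Real.pi^2 ≤ Real.Gamma (1/4)^2 := by
  have h1 := Real.Gamma_mul_Gamma_one_sub (1/4)
  have h2 : Real.Gamma (7/4) ≤ 1 := by
    have := Real.convexOn_Gamma.2 (show (1:ℝ) ∈ Set.Ioi 0 by simp) (show (2:ℝ) ∈ Set.Ioi 0 by simp) (show (0:ℝ) ≤ 1/4 by norm_num) (show (0:ℝ) ≤ 3/4 by norm_num) (by norm_num)
    simp only [smul_eq_mul, Real.Gamma_one, Real.Gamma_two] at this
    norm_num at this ⊢; exact this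
  have h3 : Real.Gamma (7/4) = 3/4 * Real.Gamma (3/4) := by
    rw [← Real.Gamma_add_one (by norm_num)]; norm_num
  have h4 : (1:ℝ) - 1/4 = 3/4 := by norm_num
  have h5 : Real.pi * (1/4) = Real.pi / 4 := by ring
  rw [h4, h5, Real.sin_pi_div_four] at h1
  have hs : √(2:ℝ)^2 = 2 := Real.sq_sqrt (by norm_num)
  have hs0 : 0 < √(2:ℝ) := by positivity
  have hg := Real.Gamma_pos_of_pos (show (0:ℝ) < 1/4 by norm_num)
  have hg3 := Real.Gamma_pos_of_pos (show (0:ℝ) < 3/4 by norm_num)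
  have h6 : Real.pi / (√2/2) = Real.pi * √2 := by field_simp; rw [hs]
  rw [h6] at h1
  have h7 : Real.pi * √2 * (3/4) ≤ Real.Gamma (1/4) := by
    rw [← h1]; nlinarith
  have := mul_self_le_mul_self (by positivity) h7
  nlinarith

lemma bes_lim (τ K : ℝ) (hτ : 0 < τ) (p q h : ℝ → ℝ) (hpq : Tendsto (fun s => (p s)^2 + (q s)^2) atBot (𝓝 K))
    (hh : Tendsto h atBot (𝓝 0)) :
    Tendsto (fun s => (p s)^2 + (τ * q s + h s)^2 / (τ^2 + 4 * Real.exp (2*s))) atBot (𝓝 K) := by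
  have hexp : Tendsto (fun s : ℝ => Real.exp (2*s)) atBot (𝓝 0) :=
    Real.tendsto_exp_atBot.comp (tendsto_id.const_mul_atBot (by norm_num))
  have hQ : Tendsto (fun s : ℝ => τ^2 + 4 * Real.exp (2*s)) atBot (𝓝 (τ^2)) := by
    simpa using (hexp.const_mul 4).const_add (τ^2)
  have hQi : Tendsto (fun s : ℝ => (τ^2 + 4 * Real.exp (2*s))⁻¹) atBot (𝓝 ((τ^2)⁻¹)) := hQ.inv₀ (by positivity)
  have hb : ∀ᶠ s in atBot, |q s| ≤ |K| + 2 := by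
    filter_upwards [hpq.eventually_lt_const (show K < K + 1 by linarith)] with s hs
    apply abs_le_of_sq_le_sq _ (by positivity)
    nlinarith [sq_nonneg (p s), le_abs_self K, abs_nonneg K]
  have hbdd : IsBoundedUnder (· ≤ ·) atBot (norm ∘ q) := isBoundedUnder_of_eventually_le hb
  have t1 : Tendsto (fun s => (τ^2 * (τ^2 + 4 * Real.exp (2*s))⁻¹ - 1) * q s * q s) atBot (𝓝 0) := by
    have h0 : Tendsto (fun s => τ^2 * (τ^2 + 4 * Real.exp (2*s))⁻¹ - 1) atBot (𝓝 0) := by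
      have := (hQi.const_mul (τ^2)).sub_const 1
      rwa [mul_inv_cancel₀ (by positivity), sub_self] at this
    exact (h0.zero_mul_isBoundedUnder_le hbdd).zero_mul_isBoundedUnder_le hbdd
  have t2 : Tendsto (fun s => 2 * τ * (h s * q s) * (τ^2 + 4 * Real.exp (2*s))⁻¹) atBot (𝓝 0) := by
    simpa using ((hh.zero_mul_isBoundedUnder_le hbdd).const_mul (2*τ)).mul hQi
  have t3 : Tendsto (fun s => (h s)^2 * (τ^2 + 4 * Real.exp (2*s))⁻¹) atBot (𝓝 0) := by
    simpa using (hh.pow 2).mul hQi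
  have := ((hpq.add t1).add t2).add t3
  simp only [add_zero] at this
  refine this.congr fun s => ?_
  rw [div_eq_mul_inv]; ring

lemma bes_normGamma (τ : ℝ) (hτ : 0 < τ) :
    ‖(Complex.Gamma (Complex.I * τ + 1))⁻¹‖^2 = Real.sinh (Real.pi * τ) / (Real.pi * τ) := by
  have hne : Complex.I * (τ:ℂ) ≠ 0 := by simp [hτ.ne']
  have h1 := Complex.Gamma_mul_Gamma_one_sub (Complex.I * τ)
  have h2 := Complex.Gamma_add_one _ hne
  have h3 : (1 - Complex.I * (τ:ℂ)) = (starRingEnd ℂ) (Complex.I * τ + 1) := by simp; ring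
  rw [h3, Complex.Gamma_conj] at h1
  have h4 : Complex.sin (Real.pi * (Complex.I * τ)) = Complex.sinh (Real.pi * τ) * Complex.I := by
    rw [← Complex.sin_mul_I]; congr 1; ring
  rw [h4] at h1
  have hs : 0 < Real.sinh (Real.pi * τ) := Real.sinh_pos_iff.2 (by positivity)
  have hsC : Complex.sinh (Real.pi * τ) = ((Real.sinh (Real.pi * τ) : ℝ) : ℂ) := by push_cast; rfl
  rw [hsC] at h1
  have h5 : (Complex.Gamma (Complex.I * τ + 1)) * (starRingEnd ℂ) (Complex.Gamma (Complex.I * τ + 1)) = ((Real.pi * τ / Real.sinh (Real.pi * τ) : ℝ) : ℂ) := by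
    have hsne : ((Real.sinh (Real.pi * τ) : ℝ) : ℂ) ≠ 0 := by exact_mod_cast hs.ne'
    have h6 : (Complex.Gamma (Complex.I * τ + 1)) * (starRingEnd ℂ) (Complex.Gamma (Complex.I * τ + 1)) =
        Complex.I * τ * (Complex.Gamma (Complex.I * τ) * (starRingEnd ℂ) (Complex.Gamma (Complex.I * τ + 1))) := by
      rw [← mul_assoc, ← h2]
    rw [h6, h1, Complex.ofReal_div, Complex.ofReal_mul]
    have hI := Complex.I_ne_zero
    field_simp
  rw [Complex.mul_conj, Complex.ofReal_inj, Complex.normSq_eq_norm_sq] at h5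
  rw [norm_inv, inv_pow, h5, inv_div]

lemma bes_coef (τ : ℝ) (hτ : 0 < τ) (k : ℕ) : Complex.Gamma (Complex.I * τ + k + 1) ≠ 0 ∧
    Complex.Gamma (Complex.I * τ + (k+1:ℕ) + 1) = (Complex.I * τ + k + 1) * Complex.Gamma (Complex.I * τ + k + 1) ∧
    ‖(Complex.Gamma (Complex.I * τ + k + 1))⁻¹‖ ≤ ‖(Complex.Gamma (Complex.I * τ + 1))⁻¹‖ := by
  have hre : ∀ k : ℕ, (Complex.I * τ + k + 1).re = k + 1 := by intro k; simp
  have hne : ∀ k : ℕ, (Complex.I * τ + k + 1) ≠ 0 := fun k h => by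
    have := hre k; rw [h] at this; simp at this; linarith [Nat.cast_nonneg (α := ℝ) k]
  have hrec : ∀ k : ℕ, Complex.Gamma (Complex.I * τ + (k+1:ℕ) + 1) = (Complex.I * τ + k + 1) * Complex.Gamma (Complex.I * τ + k + 1) := fun k => by
    rw [← Complex.Gamma_add_one _ (hne k)]; congr 1; push_cast; ring
  refine ⟨Complex.Gamma_ne_zero_of_re_pos (by rw [hre]; positivity), hrec k, ?_⟩
  induction k with
  | zero => simp
  | succ k ih =>
    rw [hrec, mul_inv, norm_mul]
    have h1 : 1 ≤ ‖Complex.I * (τ:ℂ) + k + 1‖ := by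
      refine le_trans ?_ (Complex.re_le_norm _)
      rw [hre]; linarith [Nat.cast_nonneg (α := ℝ) k]
    have h2 : ‖(Complex.I * (τ:ℂ) + k + 1)⁻¹‖ ≤ 1 := by rw [norm_inv]; exact inv_le_one_of_one_le₀ h1
    refine le_trans (mul_le_of_le_one_left (norm_nonneg _) h2) ih

lemma bes_ode (τ : ℝ) (hτ : 0 < τ) : ∃ F G H : ℝ → ℂ,
    (∀ x, besselJ (Complex.I * τ) x = F (Real.log (x/2))) ∧
    (∀ s, HasDerivAt F (G s) s) ∧
    (∀ s, HasDerivAt G (-((τ^2 + 4 * Real.exp (2*s) : ℝ) : ℂ) * F s) s) ∧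
    (∀ s, G s = Complex.I * τ * F s + H s) ∧
    Tendsto (fun s => ‖F s‖^2) atBot (𝓝 (Real.sinh (Real.pi * τ) / (Real.pi * τ))) ∧
    Tendsto H atBot (𝓝 0) := by
  set ν : ℂ := Complex.I * τ with hν
  set c : ℕ → ℂ := fun k => (-1)^k / ((k.factorial : ℂ) * Complex.Gamma (ν + k + 1)) with hc
  set A := ‖(Complex.Gamma (ν + 1))⁻¹‖ with hA
  have hcA : ∀ k, ‖c k‖ ≤ A / k.factorial := fun k => by
    have := (bes_coef τ hτ k).2.2
    simp only [hc, norm_div, norm_pow, norm_neg, norm_one, one_pow, norm_mul, Complex.norm_natCast]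
    rw [norm_inv] at this
    rw [← hν] at this
    calc 1 / ((k.factorial:ℝ) * ‖Complex.Gamma (ν + k + 1)‖) = ‖Complex.Gamma (ν + k + 1)‖⁻¹ / k.factorial := by
          rw [one_div, mul_inv, mul_comm, div_eq_mul_inv]
      _ ≤ A / k.factorial := by gcongr
  obtain ⟨hc1, hS0, hD0⟩ := bes_pow_deriv c A hcA
  set c1 : ℕ → ℂ := fun k => ((k:ℂ)+1) * c (k+1) with hc1d
  obtain ⟨hc2, hS1, hD1⟩ := bes_pow_deriv c1 A hc1
  set c2 : ℕ → ℂ := fun k => ((k:ℂ)+1) * c1 (k+1) with hc2d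
  obtain ⟨-, hS2, -⟩ := bes_pow_deriv c2 A hc2
  set P0 : ℂ → ℂ := fun z => ∑' k, c k * z^k with hP0
  set P1 : ℂ → ℂ := fun z => ∑' k, c1 k * z^k with hP1
  set P2 : ℂ → ℂ := fun z => ∑' k, c2 k * z^k with hP2
  have hcrec : ∀ k : ℕ, ((k:ℂ)+1) * (ν + k + 1) * c (k+1) = - c k := fun k => by
    obtain ⟨h1, h2, -⟩ := bes_coef τ hτ k
    obtain ⟨h3, -, -⟩ := bes_coef τ hτ (k+1)
    rw [h2] at h3
    have h4 := left_ne_zero_of_mul h3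
    have h5 : ((k:ℂ)+1) ≠ 0 := by exact_mod_cast Nat.succ_ne_zero k
    have h6 : (k.factorial : ℂ) ≠ 0 := by exact_mod_cast Nat.factorial_ne_zero k
    simp only [hc]
    rw [← hν] at h1 h2 h4
    rw [h2, Nat.factorial_succ, pow_succ]
    push_cast
    generalize Complex.Gamma (ν + k + 1) = W at *
    field_simp
  have hode : ∀ z, z * P2 z + (ν+1) * P1 z = - P0 z := fun z => by
    have a1 : z * P2 z = ∑' k : ℕ, (k:ℂ) * c1 k * z^k := by
      have e : (fun k : ℕ => ((k+1:ℕ):ℂ) * c1 (k+1) * z^(k+1)) = fun k : ℕ => z * (c2 k * z^k) := by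
        ext k; simp only [hc2d]; push_cast; ring
      have hs : Summable (fun k : ℕ => (k:ℂ) * c1 k * z^k) := by
        rw [← summable_nat_add_iff 1, e]
        exact (hS2 z).mul_left z
      rw [hs.tsum_eq_zero_add, e, tsum_mul_left]; simp [hP2]
    have hs : Summable (fun k : ℕ => (k:ℂ) * c1 k * z^k) := by
      rw [← summable_nat_add_iff 1]
      refine ((hS2 z).mul_left z).congr fun k => ?_
      simp only [hc2d]; push_cast; ring
    rw [a1, hP1, hP0]
    simp only
    rw [← tsum_mul_left, ← hs.tsum_add ((hS1 z).mul_left _), ← tsum_neg]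
    congr 1; ext k
    rw [← neg_mul, ← hcrec k]
    simp only [hc1d]; ring
  have hE : ∀ s : ℝ, HasDerivAt (fun s : ℝ => Complex.exp (ν * s)) (ν * Complex.exp (ν * s)) s := fun s => by
    have := ((Complex.ofRealCLM.hasDerivAt (x := s)).const_mul ν).cexp
    simpa [mul_comm] using this
  have hZ : ∀ s : ℝ, HasDerivAt (fun s : ℝ => ((Real.exp (2*s) : ℝ) : ℂ)) (2 * ((Real.exp (2*s) : ℝ):ℂ)) s := fun s => by
    have h1 : HasDerivAt (fun s : ℝ => Real.exp (2*s)) (2 * Real.exp (2*s)) s := by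
      have := ((hasDerivAt_id s).const_mul 2).exp
      simpa [mul_comm] using this
    have := h1.ofReal_comp
    refine this.congr_deriv (by push_cast; ring)
  have hexp : Tendsto (fun s : ℝ => ((Real.exp (2*s) : ℝ) : ℂ)) atBot (𝓝 0) := by
    have : Tendsto (fun s : ℝ => Real.exp (2*s)) atBot (𝓝 0) :=
      Real.tendsto_exp_atBot.comp (tendsto_id.const_mul_atBot (by norm_num))
    have := (Complex.continuous_ofReal.tendsto 0).comp this
    simpa [Function.comp_def] using this
  have hnorm : ∀ s : ℝ, ‖Complex.exp (ν * s)‖ = 1 := fun s => by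
    rw [Complex.norm_exp]; simp [hν]
  have hP0s : ∀ s : ℝ, HasDerivAt (fun s : ℝ => P0 ((Real.exp (2*s) : ℝ) : ℂ)) (P1 ((Real.exp (2*s) : ℝ) : ℂ) * (2 * ((Real.exp (2*s) : ℝ):ℂ))) s := fun s =>
    HasDerivAt.comp s (hD0 _) (hZ s)
  have hP1s : ∀ s : ℝ, HasDerivAt (fun s : ℝ => P1 ((Real.exp (2*s) : ℝ) : ℂ)) (P2 ((Real.exp (2*s) : ℝ) : ℂ) * (2 * ((Real.exp (2*s) : ℝ):ℂ))) s := fun s =>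
    HasDerivAt.comp s (hD1 _) (hZ s)
  refine ⟨fun s => Complex.exp (ν * s) * P0 ((Real.exp (2*s) : ℝ) : ℂ),
    fun s => ν * (Complex.exp (ν * s) * P0 ((Real.exp (2*s) : ℝ) : ℂ)) + Complex.exp (ν * s) * (2 * ((Real.exp (2*s) : ℝ):ℂ) * P1 ((Real.exp (2*s) : ℝ) : ℂ)),
    fun s => Complex.exp (ν * s) * (2 * ((Real.exp (2*s) : ℝ):ℂ) * P1 ((Real.exp (2*s) : ℝ) : ℂ)), ?_, ?_, ?_, ?_, ?_, ?_⟩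
  · intro x
    simp only [besselJ, hP0, hc]
    rw [← tsum_mul_left]
    congr 1; ext k
    rw [add_mul, Complex.exp_add]
    have : Complex.exp (2 * (k:ℂ) * (Real.log (x/2) : ℂ)) = (((Real.exp (2 * Real.log (x/2)) : ℝ)) : ℂ)^k := by
      rw [Complex.ofReal_exp, ← Complex.exp_nat_mul]; congr 1; push_cast; ring
    rw [this]; ring
  · intro s
    refine ((hE s).mul (hP0s s)).congr_deriv ?_
    ring
  · intro s
    refine ((((hE s).mul (hP0s s)).const_mul ν).add ((hE s).mul (((hZ s).const_mul 2).mul (hP1s s)))).congr_deriv ?_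
    have h := hode ((Real.exp (2*s) : ℝ) : ℂ)
    have hν2 : ν^2 = -(τ:ℂ)^2 := by rw [hν, mul_pow, Complex.I_sq]; ring
    simp only [Complex.ofReal_add, Complex.ofReal_mul, Complex.ofReal_pow, Complex.ofReal_ofNat, Pi.mul_apply]
    generalize ((Real.exp (2*s) : ℝ) : ℂ) = z at *
    linear_combination (Complex.exp (ν * s) * P0 z) * hν2 + 4 * z * Complex.exp (ν * s) * h
  · intro s; rfl
  · rw [← bes_normGamma τ hτ]
    have h0 : P0 0 = (Complex.Gamma (ν + 1))⁻¹ := by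
      simp only [hP0]
      rw [tsum_eq_single 0 (fun k hk => by simp [hk])]
      simp [hc]
    have := ((hD0 0).continuousAt.tendsto.comp hexp).norm.pow 2
    change Tendsto _ _ (𝓝 (‖P0 0‖^2)) at this
    rw [h0] at this
    refine this.congr fun s => ?_
    simp only [Function.comp, norm_mul, hnorm, one_mul]
  · rw [tendsto_zero_iff_norm_tendsto_zero]
    have := ((hexp.const_mul 2).mul ((hD1 0).continuousAt.tendsto.comp hexp)).norm
    rw [mul_zero, zero_mul, norm_zero] at this
    refine this.congr fun s => ?_
    simp only [Function.comp, norm_mul, hnorm, one_mul]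

lemma bes_main (τ : ℝ) (hτ : 1/2 ≤ τ) (x : ℝ) (hx : 0 < x) (s0 : ℝ) (hs0 : 4 * Real.exp (2*s0) = τ^2 + 1/16) :
    Real.exp (Real.log (x/2)/2) * |((besselJ (Complex.I * τ) x)^2).re| ≤
      Real.exp (s0/2) * (4/3 * (Real.sinh (Real.pi * τ) / (Real.pi * τ))) := by
  have hτ0 : 0 < τ := by linarith
  obtain ⟨F, G, H, hJ, hF, hG, hGH, hl, hH⟩ := bes_ode τ hτ0
  have hHre : Tendsto (fun s => (H s).re) atBot (𝓝 0) := by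
    simpa [Function.comp_def] using (Complex.continuous_re.tendsto 0).comp hH
  have hHim : Tendsto (fun s => (H s).im) atBot (𝓝 0) := by
    simpa [Function.comp_def] using (Complex.continuous_im.tendsto 0).comp hH
  have e1 := bes_energy τ hτ (fun s => (F s).re) (fun s => (G s).re)
    (fun s => (Complex.reCLM.hasFDerivAt.comp_hasDerivAt s (hF s)))
    (fun s => by
      refine (Complex.reCLM.hasFDerivAt.comp_hasDerivAt s (hG s)).congr_deriv ?_
      rw [← Complex.ofReal_neg]; simp only [Complex.reCLM_apply, Complex.re_ofReal_mul])
    (Real.sinh (Real.pi * τ) / (Real.pi * τ))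
    (by
      have := bes_lim τ _ hτ0 (fun s => (F s).re) (fun s => -(F s).im) (fun s => (H s).re)
        (hl.congr fun s => by rw [← Complex.normSq_eq_norm_sq, Complex.normSq_apply]; ring) hHre
      refine this.congr fun s => ?_
      simp [hGH s]) s0 hs0 (Real.log (x/2))
  have e2 := bes_energy τ hτ (fun s => (F s).im) (fun s => (G s).im)
    (fun s => (Complex.imCLM.hasFDerivAt.comp_hasDerivAt s (hF s)))
    (fun s => by
      refine (Complex.imCLM.hasFDerivAt.comp_hasDerivAt s (hG s)).congr_deriv ?_
      rw [← Complex.ofReal_neg]; simp only [Complex.imCLM_apply, Complex.im_ofReal_mul])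
    (Real.sinh (Real.pi * τ) / (Real.pi * τ))
    (by
      have := bes_lim τ _ hτ0 (fun s => (F s).im) (fun s => (F s).re) (fun s => (H s).im)
        (hl.congr fun s => by rw [← Complex.normSq_eq_norm_sq, Complex.normSq_apply]; ring) hHim
      refine this.congr fun s => ?_
      simp [hGH s]) s0 hs0 (Real.log (x/2))
  rw [hJ x]
  set f := F (Real.log (x/2))
  have e3 : (f^2).re = f.re^2 - f.im^2 := by rw [sq, Complex.mul_re]; ring
  rw [e3]
  have hp := Real.exp_pos (Real.log (x/2)/2)
  rcases abs_cases (f.re^2 - f.im^2) with ⟨h, _⟩ | ⟨h, _⟩ <;> rw [h] <;> nlinarith [sq_nonneg f.re, sq_nonneg f.im]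

theorem statement8 (M : ℝ) (hM : 0 ≤ M)
    (hbound : ∀ u : ℝ, 0 < u → Real.sqrt u * |besselY0 u| ≤ M)
    (x : ℝ) (hx : 0 < x) (n : ℕ) (hn : 1 ≤ n) :
    |((besselJ (Complex.I * n / 2) x) ^ 2).re| / Real.cosh (Real.pi * n / 2)
      ≤ (1 / 2) * (besselJ0 x ^ 2 + besselY0 x ^ 2 +
          Real.Gamma (1 / 4) ^ 2 * M / (Real.pi * Real.sqrt (Real.pi * x))) := by
  have hM2 : 0.78 * (2 / Real.pi) * √2 ≤ M := by
    have h1 := hbound 2 two_pos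
    have h2 := bes_Y0two
    have h3 := le_abs_self (besselY0 2)
    have : (0:ℝ) ≤ √2 := by positivity
    nlinarith
  set τ : ℝ := n / 2 with hτd
  have hn1 : (1:ℝ) ≤ n := by exact_mod_cast hn
  have hτ : 1/2 ≤ τ := by rw [hτd]; linarith
  have hτ0 : 0 < τ := by linarith
  have hpi := Real.pi_pos
  have hν : Complex.I * (n:ℂ) / 2 = Complex.I * ((τ:ℝ):ℂ) := by rw [hτd]; push_cast; ring
  have hC : Real.pi * n / 2 = Real.pi * τ := by rw [hτd]; ring
  rw [hν, hC]
  have hpos : 0 < τ^2 + 1/16 := by positivity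
  have hs0 : 4 * Real.exp (2 * (Real.log ((τ^2+1/16)/4) / 2)) = τ^2 + 1/16 := by
    rw [mul_div_cancel₀ _ two_ne_zero, Real.exp_log (by positivity)]; ring
  have hmain := bes_main τ hτ x hx _ hs0
  set s0 := Real.log ((τ^2+1/16)/4) / 2
  have hx2 : Real.exp (Real.log (x/2)/2) = √(x/2) := by
    rw [Real.sqrt_eq_rpow, Real.rpow_def_of_pos (by positivity)]; congr 1; ring
  rw [hx2] at hmain
  have hcosh := Real.cosh_pos (Real.pi * τ)
  have hsc : Real.sinh (Real.pi * τ) ≤ Real.cosh (Real.pi * τ) := (Real.sinh_lt_cosh _).le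
  set D := |((besselJ (Complex.I * ((τ:ℝ):ℂ)) x) ^ 2).re|
  set C := Real.cosh (Real.pi * τ)
  set y := Real.exp (s0/2) with hy
  have hy0 : 0 < y := Real.exp_pos _
  have hy4 : 4 * y^4 = τ^2 + 1/16 := by
    rw [← hs0, hy, ← Real.exp_nat_mul]; congr 2; push_cast; ring
  -- y/τ ≤ 1.06
  have hyτ : y ≤ 1.06 * τ := by
    by_contra hcon
    push Not at hcon
    have h1 : (1.06 * τ)^4 < y^4 := by gcongr
    nlinarith [sq_nonneg (τ^2 - 1/4), mul_self_le_mul_self (by norm_num) hτ, sq_nonneg τ]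
  have hD : √(x/2) * (D / C) ≤ 1.06 * (4/3) / Real.pi := by
    calc √(x/2) * (D / C) = (√(x/2) * D) / C := by ring
      _ ≤ (y * (4/3 * (Real.sinh (Real.pi * τ) / (Real.pi * τ)))) / C := by gcongr
      _ ≤ (1.06 * τ * (4/3 * (C / (Real.pi * τ)))) / C := by gcongr
      _ = _ := by field_simp
  have hΓ := bes_gamma
  have hB : (9/8 * Real.pi^2) * (0.78 * (2 / Real.pi) * √2) / (Real.pi * √(Real.pi * x)) ≤
      Real.Gamma (1 / 4) ^ 2 * M / (Real.pi * √(Real.pi * x)) := by gcongr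
  set B := Real.Gamma (1 / 4) ^ 2 * M / (Real.pi * √(Real.pi * x))
  have hsx : 0 < √x := Real.sqrt_pos.2 hx
  have hsp : 0 < √Real.pi := Real.sqrt_pos.2 hpi
  have hs2 : 0 < √(2:ℝ) := by positivity
  have hsp2 : √Real.pi^2 = Real.pi := Real.sq_sqrt hpi.le
  have hs22 : √(2:ℝ)^2 = 2 := Real.sq_sqrt (by norm_num)
  have hfin : D / C ≤ 1/2 * B := by
    refine le_trans ?_ (mul_le_mul_of_nonneg_left hB (by norm_num))
    rw [Real.sqrt_div hx.le] at hD
    rw [Real.sqrt_mul hpi.le]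
    have h1 : D / C ≤ 1.06 * (4/3) / Real.pi * √2 / √x := by
      rw [le_div_iff₀ hsx]
      have : √x * (D/C) = (√x / √2 * (D/C)) * √2 := by field_simp
      nlinarith
    refine h1.trans ?_
    have e : 1/2 * ((9/8 * Real.pi^2) * (0.78 * (2 / Real.pi) * √2) / (Real.pi * (√Real.pi * √x))) = (9/8 * 0.78 / √Real.pi) * √2 / √x := by
      field_simp
    rw [e]
    refine div_le_div_of_nonneg_right (mul_le_mul_of_nonneg_right ?_ hs2.le) hsx.le
    rw [div_le_div_iff₀ hpi hsp]
    have h17 : 1.77 ≤ √Real.pi := Real.le_sqrt_of_sq_le (by norm_num; linarith [Real.pi_gt_d4])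
    nlinarith
  nlinarith [sq_nonneg (besselJ0 x), sq_nonneg (besselY0 x)]
end
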